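/- arXiv:0804.0563 — 2 statements merged into one kernel-verified Lean document; each statement's English description precedes it below -/
import Mathlib

section
/- (Projection onto the manifold) Let M be a compact connected m-dimensional smooth submanifold of ℝ^d without boundary, and let v ∈ W^{1,1}(Ω;ℝ^d) ∩ C^∞(Ω∖Σ;ℝ^d), where Σ is a finite union of subsets each contained in an (N−2)-dimensional submanifold of ℝ^N, with v(x) ∈ co(M) (the convex hull of M) for a.e. x ∈ Ω. Then there exists w ∈ W^{1,1}(Ω;M) such that w = v a.e. on the set {x ∈ Ω∖Σ : v(x) ∈ M} and ∫_Ω |∇w| dx ≤ C⋆ ∫_Ω |∇v| dx, where C⋆ > 0 is a constant depending only on d and M. -/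
open MeasureTheory Filter Set
open scoped ENNReal RealInnerProductSpace Topology NNReal

noncomputable section

/-- Euclidean space `ℝ^N`. -/
abbrev EN (N : ℕ) : Type := EuclideanSpace ℝ (Fin N)

/-- `d × N` matrices, viewed as continuous linear maps `ℝ^N → ℝ^d`. -/
abbrev Mat (d N : ℕ) : Type := EN N →L[ℝ] EN d

variable {N d : ℕ}

/-- The tangent set of `M ⊆ ℝ^d` at `s`: velocities of curves in `M` through `s`. -/
def TangentSet (M : Set (EN d)) (s : EN d) : Set (EN d) :=
  {v | ∃ γ : ℝ → EN d, (∀ t, γ t ∈ M) ∧ γ 0 = s ∧ HasDerivAt γ v 0}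

/-- A matrix `ξ ∈ ℝ^{d×N}` has all its columns in the tangent space `T_s M`,
i.e. `ξ ∈ [T_s M]^N`. -/
def TangentCols (M : Set (EN d)) (s : EN d) (ξ : Mat d N) : Prop :=
  ∀ i : Fin N, ξ (EuclideanSpace.single i 1) ∈ TangentSet M s

/-- `T` is a smooth `m`-dimensional submanifold (without boundary) of `ℝ^n`,
described locally as a regular level set. -/
def IsSubmanifoldDim (n m : ℕ) (T : Set (EN n)) : Prop :=
  ∀ x ∈ T, ∃ (U : Set (EN n)) (F : EN n → EN (n - m)),
    IsOpen U ∧ x ∈ U ∧ ContDiffOn ℝ (⊤ : ℕ∞) F U ∧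
    (T ∩ U = {y ∈ U | F y = 0}) ∧ ∀ y ∈ U, Function.Surjective (fderiv ℝ F y)

/-- `M` is a nonempty compact connected smooth submanifold of `ℝ^d` without boundary. -/
def IsNiceManifold (d : ℕ) (M : Set (EN d)) : Prop :=
  M.Nonempty ∧ IsCompact M ∧ IsConnected M ∧ ∃ m : ℕ, m ≤ d ∧ IsSubmanifoldDim d m M

/-- A finite union of subsets of `(N-2)`-dimensional submanifolds of `ℝ^N`. -/
def IsSigmaSet (N : ℕ) (Sg : Set (EN N)) : Prop :=
  ∃ (k : ℕ) (S : Fin k → Set (EN N)), Sg = ⋃ i, S i ∧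
    ∀ i, ∃ T : Set (EN N), IsSubmanifoldDim N (N - 2) T ∧ S i ⊆ T

/-- `u ∈ W^{1,1}(A;ℝ^d)` with weak gradient `Du`. -/
def MemW11 (A : Set (EN N)) (u : EN N → EN d) (Du : EN N → Mat d N) : Prop :=
  IntegrableOn u A volume ∧ IntegrableOn Du A volume ∧
    ∀ φ : EN N → ℝ, ContDiff ℝ (⊤ : ℕ∞) φ → HasCompactSupport φ → tsupport φ ⊆ A →
      ∀ y : EN N, ∫ x in A, fderiv ℝ φ x y • u x = - ∫ x in A, φ x • Du x y

/-- `u` takes values in `M` almost everywhere on `A`. -/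
def AeIn (A : Set (EN N)) (u : EN N → EN d) (M : Set (EN d)) : Prop :=
  ∀ᵐ x ∂(volume.restrict A), u x ∈ M

/-- Recession function of `h : ℝ^{d×N} → ℝ`: `h^∞(ξ) = limsup_{t→∞} h(tξ)/t`. -/
def recc (h : Mat d N → ℝ) (ξ : Mat d N) : ℝ :=
  Filter.limsup (fun t : ℝ => h (t • ξ) / t) Filter.atTop

/-- The open cube `(0,t)^N`. -/
def posCube (N : ℕ) (t : ℝ) : Set (EN N) := {x | ∀ i, x i ∈ Set.Ioo (0 : ℝ) t}

/-- The open unit cube `(-1/2,1/2)^N`. -/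
def unitCube (N : ℕ) : Set (EN N) := {x | ∀ i, x i ∈ Set.Ioo (-(1/2) : ℝ) (1/2)}

/-- The cell infimum over `W^{1,∞}_0((0,t)^N; T_s M)` defining `Tf_hom`. -/
def tanCell (f : EN N → Mat d N → ℝ) (M : Set (EN d)) (s : EN d) (ξ : Mat d N)
    (t : ℝ) : ℝ :=
  sInf {c : ℝ | ∃ (φ : EN N → EN d) (K : ℝ≥0), LipschitzWith K φ ∧
    (∀ x, φ x ∈ TangentSet M s) ∧ (∀ x, x ∉ posCube N t → φ x = 0) ∧
    c = (t ^ N)⁻¹ * ∫ x in posCube N t, f x (ξ + fderiv ℝ φ x)}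

/-- The tangentially homogenized density `Tf_hom` (the limit as `t → ∞`,
realized as a limsup). -/
def Tfhom (f : EN N → Mat d N → ℝ) (M : Set (EN d)) (s : EN d) (ξ : Mat d N) : ℝ :=
  Filter.limsup (fun t => tanCell f M s ξ t) Filter.atTop

/-- The unconstrained cell infimum over `W^{1,∞}_0((0,t)^N; ℝ^d)`. -/
def freeCell (h : EN N → Mat d N → ℝ) (ξ : Mat d N) (t : ℝ) : ℝ :=
  sInf {c : ℝ | ∃ (φ : EN N → EN d) (K : ℝ≥0), LipschitzWith K φ ∧
    (∀ x, x ∉ posCube N t → φ x = 0) ∧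
    c = (t ^ N)⁻¹ * ∫ x in posCube N t, h x (ξ + fderiv ℝ φ x)}

/-- The usual homogenized density of a parametrized integrand `g(y,s,ξ)`. -/
def ghomOf (g : EN N → EN d → Mat d N → ℝ) (s : EN d) (ξ : Mat d N) : ℝ :=
  Filter.limsup (fun t => freeCell (fun y => g y s) ξ t) Filter.atTop

/-- The open cube of side `t` centered at the origin adapted to the
orthonormal basis `B`. -/
def obCube (B : OrthonormalBasis (Fin N) ℝ (EN N)) (t : ℝ) : Set (EN N) :=
  {x | ∀ i, ⟪x, B i⟫ ∈ Set.Ioo (-(t / 2)) (t / 2)}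

/-- Surface cell infimum at scale `t`: infimum of `t^{1-N} ∫_{tQ_ν} h(y,∇φ)` over
`φ ∈ W^{1,1}(tQ_ν;M)` with `φ = a` on `∂(tQ_ν) ∩ {x·ν₁ > 0}` and `φ = b`
on `∂(tQ_ν) ∩ {x·ν₁ ≤ 0}`. -/
def surfCell (h : EN N → Mat d N → ℝ) (M : Set (EN d)) (a b : EN d) (ν₁ : EN N)
    (B : OrthonormalBasis (Fin N) ℝ (EN N)) (t : ℝ) : ℝ :=
  sInf {c : ℝ | ∃ (φ : EN N → EN d) (Dφ : EN N → Mat d N),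
    MemW11 (obCube B t) φ Dφ ∧ AeIn (obCube B t) φ M ∧
    (∀ x ∈ frontier (obCube B t),
      (0 < ⟪x, ν₁⟫ → φ x = a) ∧ (⟪x, ν₁⟫ ≤ 0 → φ x = b)) ∧
    c = (t ^ (N - 1))⁻¹ * ∫ x in obCube B t, h x (Dφ x)}

/-- Surface cell infimum where moreover the adapted cube is chosen with two of
its faces orthogonal to `ν₁`. -/
def thetaCell (h : EN N → Mat d N → ℝ) (M : Set (EN d)) (a b : EN d) (ν₁ : EN N)
    (t : ℝ) : ℝ :=
  sInf {c : ℝ | ∃ B : OrthonormalBasis (Fin N) ℝ (EN N), (∃ i, B i = ν₁) ∧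
    c = surfCell h M a b ν₁ B t}

/-- The homogenized surface energy density `θ_hom` (built from `f^∞`). -/
def thetaHom (f : EN N → Mat d N → ℝ) (M : Set (EN d)) (a b : EN d) (ν₁ : EN N) : ℝ :=
  Filter.limsup (fun t => thetaCell (fun y => recc (f y)) M a b ν₁ t) Filter.atTop

/-- Strong `L¹(A;ℝ^d)`-convergence of a family `v ε → u` as `ε → 0⁺`. -/
def TendstoL1 (A : Set (EN N)) (v : ℝ → EN N → EN d) (u : EN N → EN d) : Prop :=
  Filter.Tendsto (fun ε => ∫ x in A, ‖v ε x - u x‖) (nhdsWithin 0 (Set.Ioi 0)) (nhds 0)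

/-- Γ-convergence as `ε → 0⁺` of the family `Fε` at the point `u`
(for the strong `L¹(A)`-topology) to the value `c`. -/
def GammaConvergesAt (Fε : ℝ → (EN N → EN d) → ℝ≥0∞) (A : Set (EN N))
    (u : EN N → EN d) (c : ℝ≥0∞) : Prop :=
  (∀ v : ℝ → EN N → EN d, TendstoL1 A v u →
      c ≤ Filter.liminf (fun ε => Fε ε (v ε)) (nhdsWithin 0 (Set.Ioi 0))) ∧
  (∃ v : ℝ → EN N → EN d, TendstoL1 A v u ∧
      Filter.limsup (fun ε => Fε ε (v ε)) (nhdsWithin 0 (Set.Ioi 0)) ≤ c)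

/-- The localized functional `F_ε(u,A) = ∫_A f(x/ε,∇u) dx` if
`u ∈ W^{1,1}(A;M)`, and `+∞` otherwise. -/
def FepsSet (f : EN N → Mat d N → ℝ) (M : Set (EN d)) (ε : ℝ) (u : EN N → EN d)
    (A : Set (EN N)) : ℝ≥0∞ :=
  ⨅ (Du : EN N → Mat d N) (_ : MemW11 A u Du ∧ AeIn A u M),
    ENNReal.ofReal (∫ x in A, f (ε⁻¹ • x) (Du x))

/-- The localized Γ-lower limit
`F(u,A) = inf { liminf_n F_{ε_n}(u_n,A) : u_n → u in L¹(A) }`. -/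
def GammaLow (f : EN N → Mat d N → ℝ) (M : Set (EN d)) (εseq : ℕ → ℝ)
    (u : EN N → EN d) (A : Set (EN N)) : ℝ≥0∞ :=
  ⨅ (v : ℕ → EN N → EN d)
    (_ : Filter.Tendsto (fun n => ∫ x in A, ‖v n x - u x‖) Filter.atTop (nhds 0)),
    Filter.liminf (fun n => FepsSet f M (εseq n) (v n) A) Filter.atTop

/-- Extension of `F(u,·)` to arbitrary sets `B ⊆ Ω` by outer regularity. -/
def GammaLowB (f : EN N → Mat d N → ℝ) (M : Set (EN d)) (εseq : ℕ → ℝ)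
    (u : EN N → EN d) (Ω B : Set (EN N)) : ℝ≥0∞ :=
  ⨅ (A : Set (EN N)) (_ : IsOpen A ∧ A ⊆ Ω ∧ B ⊆ A), GammaLow f M εseq u A

/-- A package certifying `u ∈ BV(Ω;ℝ^d)`, with all its measure-theoretic
attributes: absolutely continuous gradient `grad = ∇u`, approximate
discontinuity (jump) set `S`, traces `up = u⁺`, `um = u⁻`, normal `nu = ν_u`,
approximate limit `ap = ũ`, Cantor part `cm = |D^c u|` with polar density
`cd = dD^cu/d|D^cu|`. -/
structure BVPack (Ω : Set (EN N)) (u : EN N → EN d) where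
  grad : EN N → Mat d N
  S : Set (EN N)
  up : EN N → EN d
  um : EN N → EN d
  nu : EN N → EN N
  ap : EN N → EN d
  cm : Measure (EN N)
  cd : EN N → Mat d N
  integrable : IntegrableOn u Ω volume
  grad_int : IntegrableOn grad Ω volume
  S_meas : MeasurableSet S
  cm_fin : cm Set.univ ≠ ⊤
  cm_in : cm Ωᶜ = 0
  jump_int : IntegrableOn (fun x => ‖up x - um x‖) (Ω ∩ S) (μH[(N : ℝ) - 1])
  nu_unit : ∀ x ∈ S, ‖nu x‖ = 1
  jump_ne : ∀ x ∈ S, up x ≠ um x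
  cd_unit : ∀ᵐ x ∂cm, ‖cd x‖ = 1
  cm_sing : cm ⟂ₘ (volume : Measure (EN N))
  cm_nojump : cm S = 0
  ap_lim : ∀ x ∈ Ω \ S,
    Filter.Tendsto
      (fun r : ℝ => (volume (Metric.ball x r)).toReal⁻¹ *
        ∫ y in Metric.ball x r, ‖u y - ap x‖)
      (nhdsWithin 0 (Set.Ioi 0)) (nhds 0)
  jump_lim_up : ∀ x ∈ Ω ∩ S,
    Filter.Tendsto
      (fun r : ℝ => (volume (Metric.ball x r)).toReal⁻¹ *
        ∫ y in {y ∈ Metric.ball x r | 0 < ⟪y - x, nu x⟫}, ‖u y - up x‖)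
      (nhdsWithin 0 (Set.Ioi 0)) (nhds 0)
  jump_lim_um : ∀ x ∈ Ω ∩ S,
    Filter.Tendsto
      (fun r : ℝ => (volume (Metric.ball x r)).toReal⁻¹ *
        ∫ y in {y ∈ Metric.ball x r | ⟪y - x, nu x⟫ < 0}, ‖u y - um x‖)
      (nhdsWithin 0 (Set.Ioi 0)) (nhds 0)
  decomp : ∀ φ : EN N → ℝ, ContDiff ℝ (⊤ : ℕ∞) φ → HasCompactSupport φ → tsupport φ ⊆ Ω →
    ∀ y : EN N,
      ∫ x in Ω, fderiv ℝ φ x y • u x =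
        -(∫ x in Ω, φ x • grad x y) - (∫ x, φ x • cd x y ∂cm) -
          ∫ x in Ω ∩ S, (⟪nu x, y⟫ * φ x) • (up x - um x) ∂(μH[(N : ℝ) - 1])

/-- The total variation measure `|Du|` associated to a BV package. -/
def totalVar (Ω : Set (EN N)) (u : EN N → EN d) (P : BVPack Ω u) : Measure (EN N) :=
  ((volume.restrict Ω).withDensity fun x => ENNReal.ofReal ‖P.grad x‖) + P.cm +
    ((μH[(N : ℝ) - 1]).restrict (Ω ∩ P.S)).withDensity
      fun x => ENNReal.ofReal ‖P.up x - P.um x‖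

/-- The standing assumptions (Carathéodory, (H1), (H2), (H3)) on the
integrand `f`. -/
structure StdIntegrand (N d : ℕ) (f : EN N → Mat d N → ℝ) (α β L : ℝ) : Prop where
  meas : ∀ ξ : Mat d N, Measurable fun y => f y ξ
  nonneg : ∀ y ξ, 0 ≤ f y ξ
  periodic : ∀ (y : EN N) (ξ : Mat d N) (i : Fin N),
    f (y + EuclideanSpace.single i 1) ξ = f y ξ
  alpha_pos : 0 < α
  alpha_le_beta : α ≤ β
  growth : ∀ᵐ y ∂(volume : Measure (EN N)), ∀ ξ,
    α * ‖ξ‖ ≤ f y ξ ∧ f y ξ ≤ β * (1 + ‖ξ‖)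
  lip_pos : 0 < L
  lip : ∀ᵐ y ∂(volume : Measure (EN N)), ∀ ξ ξ', |f y ξ - f y ξ'| ≤ L * ‖ξ - ξ'‖

/-- Hypothesis (H4): `|f(y,ξ) - f^∞(y,ξ)| ≤ C(1+|ξ|^{1-q})`. -/
def H4 (f : EN N → Mat d N → ℝ) (C q : ℝ) : Prop :=
  0 < C ∧ 0 < q ∧ q < 1 ∧
    ∀ᵐ y ∂(volume : Measure (EN N)), ∀ ξ,
      |f y ξ - recc (f y) ξ| ≤ C * (1 + ‖ξ‖ ^ (1 - q))

/-- The projection data used to build the modified integrand `g`: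
`pr` is the nearest-point projection onto `M` on a `δ₀`-neighborhood,
`tanProj s` is the orthogonal projection of `ℝ^d` onto `T_s M` (for `s ∈ M`),
and `chi` is the smooth cut-off. -/
structure ProjData {d : ℕ} (M : Set (EN d)) where
  δ₀ : ℝ
  pr : EN d → EN d
  chi : EN d → ℝ
  tanProj : EN d → EN d →L[ℝ] EN d
  δ₀_pos : 0 < δ₀
  pr_mem : ∀ s, Metric.infDist s M < δ₀ → pr s ∈ M
  pr_nearest : ∀ s, Metric.infDist s M < δ₀ → ‖s - pr s‖ = Metric.infDist s M
  pr_lip : ∃ K : ℝ≥0, LipschitzOnWith K pr {s | Metric.infDist s M < δ₀}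
  tanProj_lip : ∃ K : ℝ≥0,
    LipschitzOnWith K (fun s => tanProj (pr s)) {s | Metric.infDist s M < δ₀}
  chi_smooth : ContDiff ℝ (⊤ : ℕ∞) chi
  chi_supp : HasCompactSupport chi
  chi_range : ∀ s, chi s ∈ Set.Icc (0 : ℝ) 1
  chi_one : ∀ s, Metric.infDist s M ≤ δ₀ / 2 → chi s = 1
  chi_zero : ∀ s, 3 * δ₀ / 4 ≤ Metric.infDist s M → chi s = 0
  tanProj_mem : ∀ s ∈ M, ∀ v, tanProj s v ∈ TangentSet M s
  tanProj_id : ∀ s ∈ M, ∀ v ∈ TangentSet M s, tanProj s v = v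
  tanProj_symm : ∀ s ∈ M, ∀ v w, ⟪tanProj s v, w⟫ = ⟪v, tanProj s w⟫

/-- The cut-off tangential projection `ℙ_s(ξ) = χ(s) P_{Π(s)} ∘ ξ`. -/
def tanP {M : Set (EN d)} (D : ProjData M) (s : EN d) (ξ : Mat d N) : Mat d N :=
  D.chi s • ((D.tanProj (D.pr s)).comp ξ)

/-- The modified integrand `g(y,s,ξ) = f(y,ℙ_s(ξ)) + |ξ - ℙ_s(ξ)|`. -/
def gOf {M : Set (EN d)} (D : ProjData M) (f : EN N → Mat d N → ℝ) :
    EN N → EN d → Mat d N → ℝ :=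
  fun y s ξ => f y (tanP D s ξ) + ‖ξ - tanP D s ξ‖

/-- The geodesic distance on `M`. -/
def geoDist (M : Set (EN d)) (a b : EN d) : ℝ :=
  sInf {l : ℝ | ∃ γ : ℝ → EN d, ContDiff ℝ (⊤ : ℕ∞) γ ∧ (∀ t, γ t ∈ M) ∧
    γ 0 = b ∧ γ 1 = a ∧ l = ∫ t in Set.Icc (0 : ℝ) 1, ‖deriv γ t‖}

/-- The class `G(a,b)` of geodesic curves between `a` and `b`. -/
def GeodClass (M : Set (EN d)) (a b : EN d) : Set (ℝ → EN d) :=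
  {γ | ContDiff ℝ (⊤ : ℕ∞) γ ∧ (∀ t, γ t ∈ M) ∧ (∀ t : ℝ, 1 / 2 ≤ t → γ t = a) ∧
    (∀ t : ℝ, t ≤ -(1 / 2 : ℝ) → γ t = b) ∧
    (∫ t : ℝ, ‖deriv γ t‖) = geoDist M a b}

/-- `I_ε(a,b,ν)`: infimum of `∫_{Q_ν} h(x/ε,∇u)` over the geodesic-boundary
class `B_ε(a,b,ν)`. -/
def Ieps (h : EN N → Mat d N → ℝ) (M : Set (EN d)) (a b : EN d) (ν₁ : EN N)
    (B : OrthonormalBasis (Fin N) ℝ (EN N)) (ε : ℝ) : ℝ :=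
  sInf {c : ℝ | ∃ (φ : EN N → EN d) (Dφ : EN N → Mat d N) (γ : ℝ → EN d),
    γ ∈ GeodClass M a b ∧ MemW11 (obCube B 1) φ Dφ ∧ AeIn (obCube B 1) φ M ∧
    (∀ x ∈ frontier (obCube B 1), φ x = γ (⟪x, ν₁⟫ / ε)) ∧
    c = ∫ x in obCube B 1, h (ε⁻¹ • x) (Dφ x)}

/-- `J_ε(a,b,ν)`: infimum of `∫_{Q_ν} h(x/ε,∇u)` with sharp-interface boundary
datum `u_{a,b,ν}`. -/
def Jeps (h : EN N → Mat d N → ℝ) (M : Set (EN d)) (a b : EN d) (ν₁ : EN N)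
    (B : OrthonormalBasis (Fin N) ℝ (EN N)) (ε : ℝ) : ℝ :=
  sInf {c : ℝ | ∃ (φ : EN N → EN d) (Dφ : EN N → Mat d N),
    MemW11 (obCube B 1) φ Dφ ∧ AeIn (obCube B 1) φ M ∧
    (∀ x ∈ frontier (obCube B 1),
      (0 < ⟪x, ν₁⟫ → φ x = a) ∧ (⟪x, ν₁⟫ ≤ 0 → φ x = b)) ∧
    c = ∫ x in obCube B 1, h (ε⁻¹ • x) (Dφ x)}

/-- The defining properties of the interfacial density `K` from the integral
representation on partitions. -/
def IsJumpRepr (Ω : Set (EN N)) (f : EN N → Mat d N → ℝ) (M : Set (EN d))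
    (εseq : ℕ → ℝ) (K : EN d → EN d → EN N → ℝ) : Prop :=
  (∀ a ∈ M, ∀ b ∈ M, ∀ ν₁ : EN N, ‖ν₁‖ = 1 → 0 ≤ K a b ν₁) ∧
  (∀ a ∈ M, ∀ b ∈ M, ContinuousOn (K a b) (Metric.sphere (0 : EN N) 1)) ∧
  (∀ a ∈ M, ∀ b ∈ M, ∀ ν₁ : EN N, ‖ν₁‖ = 1 → K a b ν₁ = K b a (-ν₁)) ∧
  (∀ T : Finset (EN d), (T : Set (EN d)) ⊆ M →
    ∀ (u : EN N → EN d) (P : BVPack Ω u),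
      (∀ᵐ x ∂(volume.restrict Ω), u x ∈ (T : Set (EN d))) →
      ∀ S : Set (EN N), MeasurableSet S → S ⊆ Ω ∩ P.S →
        GammaLowB f M εseq u Ω S =
          ENNReal.ofReal
            (∫ x in S, K (P.up x) (P.um x) (P.nu x) ∂(μH[(N : ℝ) - 1])))

end


/-- Lagrange multiplier form of the nearest-point condition. -/
lemma aux_lagrange {d k : ℕ} {M U : Set (EN d)} {F : EN d → EN k} (hU : IsOpen U)
    (hF : ContDiffOn ℝ (⊤ : ℕ∞) F U) (hMU : M ∩ U = {y ∈ U | F y = 0})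
    (hs : ∀ y ∈ U, Function.Surjective (fderiv ℝ F y))
    {p y : EN d} (hp : p ∈ M) (hpU : p ∈ U) (hnear : ∀ q ∈ M, dist y p ≤ dist y q) :
    ∃ Λ : EN k →ₗ[ℝ] ℝ, ∀ h, ⟪y - p, h⟫ = Λ (fderiv ℝ F p h) := by
  have hFp : F p = 0 := by
    have : p ∈ M ∩ U := ⟨hp, hpU⟩
    rw [hMU] at this
    exact this.2
  have hcd : ContDiffAt ℝ (⊤ : ℕ∞) F p := hF.contDiffAt (hU.mem_nhds hpU)
  have hF' : HasStrictFDerivAt F (fderiv ℝ F p) p :=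
    hcd.hasStrictFDerivAt (by simp)
  have hφ' : HasStrictFDerivAt (fun x : EN d => ‖x - y‖ ^ 2)
      ((2 : ℝ) • (innerSL ℝ (p - y))) p := by
    have h1 := (hasStrictFDerivAt_norm_sq (p - y)).comp p
      ((hasStrictFDerivAt_id p).sub_const y)
    have h2 : ((2 : ℝ) • (innerSL ℝ (p - y))) = (2 • (innerSL ℝ (p - y))).comp (ContinuousLinearMap.id ℝ (EN d)) := by
      ext v; simp [two_smul]
    rw [h2]
    exact h1
  have hext : IsLocalExtrOn (fun x : EN d => ‖x - y‖ ^ 2) {x | F x = F p} p := by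
    left
    have : ∀ᶠ x in 𝓝[{x | F x = F p}] p, x ∈ U ∧ F x = F p := by
      filter_upwards [mem_nhdsWithin_of_mem_nhds (hU.mem_nhds hpU), self_mem_nhdsWithin]
        with x hx hx2 using ⟨hx, hx2⟩
    filter_upwards [this] with x hx
    have hxM : x ∈ M := by
      have : x ∈ M ∩ U := by rw [hMU]; exact ⟨hx.1, by rw [hx.2, hFp]⟩
      exact this.1
    have := hnear x hxM
    rw [dist_eq_norm, dist_eq_norm, norm_sub_rev y p, norm_sub_rev y x] at this
    gcongr
  obtain ⟨Λ, Λ₀, hne, h⟩ := hext.exists_linear_map_of_hasStrictFDerivAt hF' hφ'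
  have hΛ₀ : Λ₀ ≠ 0 := by
    intro h0
    apply hne
    rw [h0]
    have : Λ = 0 := by
      ext1 z
      obtain ⟨w, rfl⟩ := hs p hpU z
      have := h w
      simpa [h0] using this
    simp [this]
  refine ⟨(1 / (2 * Λ₀)) • Λ, fun w => ?_⟩
  have := h w
  simp only [_root_.smul_apply, innerSL_apply_apply, smul_eq_mul] at this
  simp only [LinearMap.smul_apply, smul_eq_mul]
  have h3 : ⟪y - p, w⟫ = - ⟪p - y, w⟫ := by rw [← inner_neg_left, neg_sub]
  rw [h3]
  field_simp
  linarith

lemma aux_reach_local {d m : ℕ} {M : Set (EN d)} (hM : IsSubmanifoldDim d m M) {p₀ : EN d}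
    (hp₀ : p₀ ∈ M) : ∃ η > 0, ∃ C : ℝ, 0 ≤ C ∧ ∀ p ∈ M, dist p p₀ < η → ∀ y,
      (∀ q ∈ M, dist y p ≤ dist y q) → ∀ q ∈ M, dist q p₀ < η →
      ⟪y - p, q - p⟫ ≤ C * ‖y - p‖ * ‖q - p‖ ^ 2 := by
  obtain ⟨U, F, hU, hpU, hF, hMU, hs⟩ := hM p₀ hp₀
  -- right inverse
  obtain ⟨R, hR⟩ : ∃ R : EN (d - m) →L[ℝ] EN d, (fderiv ℝ F p₀).comp R = ContinuousLinearMap.id ℝ _ := by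
    obtain ⟨g, hg⟩ := (fderiv ℝ F p₀).toLinearMap.exists_rightInverse_of_surjective
      (LinearMap.range_eq_top.2 (hs p₀ hpU))
    refine ⟨LinearMap.toContinuousLinearMap g, ?_⟩
    ext1 x
    simpa using LinearMap.congr_fun hg x
  have hdF : ContDiffOn ℝ 1 (fderiv ℝ F) U := hF.fderiv_of_isOpen hU (by norm_cast)
  have hdFc : ContDiffAt ℝ 1 (fderiv ℝ F) p₀ := hdF.contDiffAt (hU.mem_nhds hpU)
  obtain ⟨L, W, hW, hL⟩ := hdFc.exists_lipschitzOnWith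
  -- closeness
  have hcl : ∀ᶠ p in 𝓝 p₀, ‖fderiv ℝ F p - fderiv ℝ F p₀‖ * ‖R‖ < 1 / 2 := by
    have hc : ContinuousAt (fun p => ‖fderiv ℝ F p - fderiv ℝ F p₀‖ * ‖R‖) p₀ :=
      ((hdFc.continuousAt.sub continuousAt_const).norm).mul continuousAt_const
    refine hc.eventually_lt continuousAt_const ?_
    simp
  obtain ⟨η, hη, hball⟩ := Metric.eventually_nhds_iff_ball.1
    (hcl.and ((hU.eventually_mem hpU).and hW))
  refine ⟨η, hη, 2 * ‖R‖ * L, by positivity, fun p hp hpη y hy q hq hqη => ?_⟩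
  have hpb := hball p hpη
  obtain ⟨Λ, hΛ⟩ := aux_lagrange hU hF hMU hs hp hpb.2.1 hy
  have hF0 : ∀ x ∈ M, x ∈ U → F x = 0 := by
    intro x hx hxU
    have : x ∈ M ∩ U := ⟨hx, hxU⟩
    rw [hMU] at this
    exact this.2
  -- bound on Λ
  have hΛb : ∀ z, |Λ z| ≤ 2 * ‖R‖ * ‖y - p‖ * ‖z‖ := by
    set Λc := LinearMap.toContinuousLinearMap Λ with hΛc
    have key : ‖Λc‖ ≤ ‖R‖ * ‖y - p‖ + ‖Λc‖ * (1/2) := by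
      refine ContinuousLinearMap.opNorm_le_bound _ (by positivity) fun z => ?_
      have e1 : Λc z = ⟪y - p, R z⟫ - Λc ((fderiv ℝ F p - fderiv ℝ F p₀) (R z)) := by
        have : fderiv ℝ F p₀ (R z) = z := by
          have := congrArg (fun A => A z) hR
          simpa using this
        rw [hΛ, _root_.sub_apply, this, map_sub]
        simp [hΛc]
      rw [e1]
      calc ‖⟪y - p, R z⟫ - Λc ((fderiv ℝ F p - fderiv ℝ F p₀) (R z))‖
          ≤ ‖⟪y - p, R z⟫‖ + ‖Λc ((fderiv ℝ F p - fderiv ℝ F p₀) (R z))‖ := norm_sub_le _ _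
        _ ≤ ‖y - p‖ * (‖R‖ * ‖z‖) + ‖Λc‖ * (‖fderiv ℝ F p - fderiv ℝ F p₀‖ * (‖R‖ * ‖z‖)) := by
            gcongr
            · exact (norm_inner_le_norm _ _).trans (by gcongr; exact R.le_opNorm z)
            · refine (Λc.le_opNorm _).trans ?_
              gcongr
              refine (ContinuousLinearMap.le_opNorm _ _).trans ?_
              gcongr
              exact R.le_opNorm z
        _ ≤ (‖R‖ * ‖y - p‖ + ‖Λc‖ * (1/2)) * ‖z‖ := by
            have h1 : (‖fderiv ℝ F p - fderiv ℝ F p₀‖ * ‖R‖) * ‖z‖ * ‖Λc‖ ≤ 1/2 * ‖z‖ * ‖Λc‖ := by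
              gcongr
              exact hpb.1.le
            nlinarith [h1]
    intro z
    have h2 : ‖Λc‖ ≤ 2 * ‖R‖ * ‖y - p‖ := by linarith
    calc |Λ z| = ‖Λc z‖ := by simp [hΛc]
      _ ≤ ‖Λc‖ * ‖z‖ := Λc.le_opNorm z
      _ ≤ _ := by gcongr
  -- Taylor
  have htaylor : ‖fderiv ℝ F p (q - p)‖ ≤ L * ‖q - p‖ * ‖q - p‖ := by
    have hconv : Convex ℝ (segment ℝ p q) := convex_segment p q
    have hsub : segment ℝ p q ⊆ Metric.ball p₀ η := (convex_ball p₀ η).segment_subset hpη hqη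
    have := hconv.norm_image_sub_le_of_norm_hasFDerivWithin_le' (f := F) (f' := fderiv ℝ F)
      (φ := fderiv ℝ F p) (C := L * ‖q - p‖) (x := p) (y := q) ?_ ?_
      (left_mem_segment ℝ p q) (right_mem_segment ℝ p q)
    · rw [hF0 p hp hpb.2.1, hF0 q hq (hball q hqη).2.1] at this
      rw [sub_zero, zero_sub, norm_neg] at this
      exact this
    · intro x hx
      have hxU := (hball x (hsub hx)).2.1
      exact ((hF.contDiffAt (hU.mem_nhds hxU)).differentiableAt (by simp)).hasFDerivAt.hasFDerivWithinAt
    · intro x hx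
      have h1 := hL.norm_sub_le (hball x (hsub hx)).2.2 hpb.2.2
      refine h1.trans ?_
      gcongr
      have : dist x p ≤ dist p q := by
        rw [← dist_comm q p]
        have := mem_segment_iff_wbtw.1 hx
        rw [dist_comm q p]
        have h4 := this.dist_add_dist
        rw [dist_comm x p]
        linarith [dist_nonneg (x := x) (y := q)]
      rwa [dist_eq_norm, dist_comm, dist_eq_norm] at this
  calc ⟪y - p, q - p⟫ = Λ (fderiv ℝ F p (q - p)) := hΛ _
    _ ≤ |Λ (fderiv ℝ F p (q - p))| := le_abs_self _
    _ ≤ 2 * ‖R‖ * ‖y - p‖ * ‖fderiv ℝ F p (q - p)‖ := hΛb _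
    _ ≤ 2 * ‖R‖ * ‖y - p‖ * (L * ‖q - p‖ * ‖q - p‖) := by gcongr
    _ = _ := by ring

lemma aux_reach {d m : ℕ} {M : Set (EN d)} (hM : IsSubmanifoldDim d m M) (hc : IsCompact M) :
    ∃ C : ℝ, 0 < C ∧ ∀ p ∈ M, ∀ y, (∀ q ∈ M, dist y p ≤ dist y q) → ∀ q ∈ M,
      ⟪y - p, q - p⟫ ≤ C * ‖y - p‖ * ‖q - p‖ ^ 2 := by
  have key : ∃ C : ℝ, 0 < C ∧ ∀ p ∈ M, p ∈ M → ∀ y, (∀ q ∈ M, dist y p ≤ dist y q) → ∀ q ∈ M,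
      ⟪y - p, q - p⟫ ≤ C * ‖y - p‖ * ‖q - p‖ ^ 2 := by
    refine hc.induction_on (p := fun s => ∃ C : ℝ, 0 < C ∧ ∀ p ∈ s, p ∈ M → ∀ y,
      (∀ q ∈ M, dist y p ≤ dist y q) → ∀ q ∈ M,
      ⟪y - p, q - p⟫ ≤ C * ‖y - p‖ * ‖q - p‖ ^ 2) ⟨1, one_pos, by simp⟩ ?_ ?_ ?_
    · rintro s t hst ⟨C, hC, h⟩
      exact ⟨C, hC, fun p hp => h p (hst hp)⟩
    · rintro s t ⟨C, hC, h⟩ ⟨C', hC', h'⟩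
      refine ⟨max C C', lt_max_of_lt_left hC, fun p hp hpM y hy q hq => ?_⟩
      rcases hp with hp | hp
      · exact (h p hp hpM y hy q hq).trans (by gcongr; exact le_max_left _ _)
      · exact (h' p hp hpM y hy q hq).trans (by gcongr; exact le_max_right _ _)
    · intro p₀ hp₀
      obtain ⟨η, hη, C, hC, h⟩ := aux_reach_local hM hp₀
      refine ⟨Metric.ball p₀ (η / 2), mem_nhdsWithin_of_mem_nhds (Metric.ball_mem_nhds _ (by positivity)),
        C + 2 / η, by positivity, fun p hp hpM y hy q hq => ?_⟩
      rw [Metric.mem_ball] at hp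
      by_cases hqη : dist q p₀ < η
      · refine (h p hpM (by linarith) y hy q hq hqη).trans ?_
        gcongr
        have : 0 < 2 / η := by positivity
        linarith
      · have h1 : η / 2 ≤ ‖q - p‖ := by
          rw [← dist_eq_norm]
          have := dist_triangle q p p₀
          linarith
        calc ⟪y - p, q - p⟫ ≤ ‖y - p‖ * ‖q - p‖ := real_inner_le_norm _ _
          _ ≤ ‖y - p‖ * ‖q - p‖ * ((2 / η) * ‖q - p‖) := by
              refine le_mul_of_one_le_right (by positivity) ?_
              rw [div_mul_eq_mul_div, le_div_iff₀ hη]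
              linarith
          _ = (2 / η) * ‖y - p‖ * ‖q - p‖ ^ 2 := by ring
          _ ≤ _ := by
              gcongr
              linarith
  obtain ⟨C, hC, h⟩ := key
  exact ⟨C, hC, fun p hp => h p hp hp⟩

lemma aux_retract {d m : ℕ} {M : Set (EN d)} (hM : IsSubmanifoldDim d m M) (hc : IsCompact M)
    (hne : M.Nonempty) : ∃ δ : ℝ, 0 < δ ∧ ∃ r : EN d → EN d, (∀ y, r y ∈ M) ∧ (∀ p ∈ M, r p = p) ∧
      ∀ y z, Metric.infDist y M < δ → Metric.infDist z M < δ → ‖r y - r z‖ ≤ 2 * ‖y - z‖ := by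
  obtain ⟨C, hC, h⟩ := aux_reach hM hc
  have hex : ∀ y : EN d, ∃ p ∈ M, Metric.infDist y M = dist y p := fun y =>
    hc.exists_infDist_eq_dist hne y
  choose r hr hd using hex
  have hnear : ∀ y, ∀ q ∈ M, dist y (r y) ≤ dist y q := fun y q hq => by
    rw [← hd]; exact Metric.infDist_le_dist_of_mem hq
  refine ⟨1 / (4 * C), by positivity, r, hr, fun p hp => ?_, fun y z hy hz => ?_⟩
  · have := hnear p p hp
    rw [dist_self] at this
    exact (dist_le_zero.1 this).symm
  · have h1 := h (r y) (hr y) y (hnear y) (r z) (hr z)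
    have h2 := h (r z) (hr z) z (hnear z) (r y) (hr y)
    rw [hd, dist_eq_norm] at hy hz
    set e := ‖r y - r z‖ with he
    have he' : ‖r z - r y‖ = e := norm_sub_rev _ _
    rw [he'] at h1
    have hy' : C * ‖y - r y‖ ≤ 1/4 := by
      have := mul_le_mul_of_nonneg_left hy.le hC.le
      calc _ ≤ _ := this
        _ = 1/4 := by field_simp
    have hz' : C * ‖z - r z‖ ≤ 1/4 := by
      have := mul_le_mul_of_nonneg_left hz.le hC.le
      calc _ ≤ _ := this
        _ = 1/4 := by field_simp
    have h1' : ⟪y - r y, r z - r y⟫ ≤ 1/4 * e ^ 2 := h1.trans (by gcongr)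
    have h2' : ⟪z - r z, r y - r z⟫ ≤ 1/4 * e ^ 2 := h2.trans (by gcongr)
    have h3 : e ^ 2 = ⟪y - r y, r z - r y⟫ + ⟪z - r z, r y - r z⟫ + ⟪y - z, r y - r z⟫ := by
      rw [he, ← real_inner_self_eq_norm_sq]
      have : r z - r y = -(r y - r z) := by abel
      rw [this, inner_neg_right, ← sub_eq_neg_add, ← inner_sub_left, ← inner_add_left]
      congr 1
      abel
    have h4 : ⟪y - z, r y - r z⟫ ≤ ‖y - z‖ * e := real_inner_le_norm _ _
    have he0 : 0 ≤ e := norm_nonneg _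
    rcases he0.eq_or_lt with h0 | h0
    · rw [← h0]; positivity
    · have : e * e ≤ e * (2 * ‖y - z‖) := by nlinarith
      exact le_of_mul_le_mul_left this h0

/-- There is a Lipschitz path inside `M` from `p` to `q`. -/
def LipJoin {d : ℕ} (M : Set (EN d)) (p q : EN d) : Prop :=
  ∃ (K : ℝ≥0) (γ : ℝ → EN d), LipschitzWith K γ ∧ (∀ t, γ t ∈ M) ∧ (∀ t ≤ 0, γ t = p) ∧
    (∀ t ≥ 1, γ t = q)

lemma LipJoin.symm {d : ℕ} {M : Set (EN d)} {p q : EN d} (h : LipJoin M p q) : LipJoin M q p := by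
  obtain ⟨K, γ, hK, hm, h0, h1⟩ := h
  refine ⟨K, fun t => γ (1 - t), ?_, fun t => hm _, fun t ht => h1 _ (by linarith),
    fun t ht => h0 _ (by linarith)⟩
  refine LipschitzWith.of_dist_le_mul fun x y => ?_
  refine (hK.dist_le_mul _ _).trans_eq ?_
  congr 1
  rw [Real.dist_eq, Real.dist_eq, abs_sub_comm]
  congr 1
  ring

lemma LipJoin.trans {d : ℕ} {M : Set (EN d)} {p q s : EN d} (h : LipJoin M p q)
    (h' : LipJoin M q s) : LipJoin M p s := by
  obtain ⟨K, γ, hK, hm, h0, h1⟩ := h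
  obtain ⟨K', γ', hK', hm', h0', h1'⟩ := h'
  refine ⟨2 * K + 2 * K', fun t => γ (2 * t) + (γ' (2 * t - 1) - q), ?_, fun t => ?_, fun t ht => ?_,
    fun t ht => ?_⟩
  · refine LipschitzWith.of_dist_le_mul fun x y => ?_
    refine (dist_add_add_le _ _ _ _).trans ?_
    rw [dist_sub_right]
    have a := hK.dist_le_mul (2 * x) (2 * y)
    have b := hK'.dist_le_mul (2 * x - 1) (2 * y - 1)
    have e : dist (2 * x) (2 * y) = 2 * dist x y := by
      rw [Real.dist_eq, Real.dist_eq, ← mul_sub, abs_mul]; norm_num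
    rw [dist_sub_right, e] at b
    rw [e] at a
    push_cast
    linarith
  · rcases le_total t (1/2) with ht | ht
    · simp only [h0' (2 * t - 1) (by linarith), sub_self, add_zero]; exact hm _
    · simp only [h1 (2 * t) (by linarith), add_sub_cancel]; exact hm' _
  · simp only [h0' (2 * t - 1) (by linarith), sub_self, add_zero]; exact h0 _ (by linarith)
  · simp only [h1 (2 * t) (by linarith), add_sub_cancel]; exact h1' _ (by linarith)

lemma aux_paths {d : ℕ} {M : Set (EN d)} (hconn : IsConnected M) {δ : ℝ} (hδ : 0 < δ)
    {r : EN d → EN d} (hr : ∀ y, r y ∈ M) (hrid : ∀ p ∈ M, r p = p)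
    (hrL : ∀ y z, Metric.infDist y M < δ → Metric.infDist z M < δ → ‖r y - r z‖ ≤ 2 * ‖y - z‖) :
    ∀ p ∈ M, ∀ q ∈ M, LipJoin M p q := by
  have hloc : ∀ p ∈ M, ∀ q ∈ M, dist q p < δ → LipJoin M p q := by
    intro p hp q hq hpq
    set c : ℝ → ℝ := fun t => max 0 (min 1 t) with hcdef
    have hc0 : ∀ t, 0 ≤ c t := fun t => le_max_left _ _
    have hc1 : ∀ t, c t ≤ 1 := fun t => max_le zero_le_one (min_le_left _ _)
    have htube : ∀ t, Metric.infDist (p + c t • (q - p)) M < δ := by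
      intro t
      refine (Metric.infDist_le_dist_of_mem hp).trans_lt ?_
      rw [dist_eq_norm, add_sub_cancel_left, norm_smul, Real.norm_of_nonneg (hc0 t)]
      rw [dist_eq_norm] at hpq
      refine lt_of_le_of_lt ?_ hpq
      exact mul_le_of_le_one_left (norm_nonneg _) (hc1 t)
    refine ⟨2 * ‖q - p‖₊, fun t => r (p + c t • (q - p)), ?_, fun t => hr _, fun t ht => ?_,
      fun t ht => ?_⟩
    · refine LipschitzWith.of_dist_le_mul fun x y => ?_
      rw [dist_eq_norm]
      refine (hrL _ _ (htube x) (htube y)).trans ?_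
      rw [add_sub_add_left_eq_sub, ← sub_smul, norm_smul]
      have : |c x - c y| ≤ |x - y| := by
        refine (abs_max_sub_max_le_max _ _ _ _).trans ?_
        refine max_le (by simp) ?_
        refine (abs_min_sub_min_le_max _ _ _ _).trans ?_
        exact max_le (by simp) le_rfl
      rw [Real.norm_eq_abs, Real.dist_eq]
      push_cast
      have := mul_le_mul_of_nonneg_right this (norm_nonneg (q - p))
      linarith
    · have : c t = 0 := by
        simp only [hcdef]; rw [min_eq_right (by linarith)]; exact max_eq_left ht
      simp only [this, zero_smul, add_zero]
      exact hrid p hp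
    · have : c t = 1 := by
        simp only [hcdef]; rw [min_eq_left ht]; simp
      simp only [this, one_smul, add_sub_cancel]
      exact hrid q hq
  intro p hp q hq
  refine hconn.isPreconnected.induction₂' (fun x y => LipJoin M x y) ?_ ?_ hp hq
  · intro x hx
    filter_upwards [mem_nhdsWithin_of_mem_nhds (Metric.ball_mem_nhds x hδ), self_mem_nhdsWithin]
      with y hy hyM
    have := hloc x hx y hyM hy
    exact ⟨this, this.symm⟩
  · intro x y z _ _ _ h1 h2
    exact h1.trans h2


/-- The (regularised) distance to the singular set. -/
noncomputable def Sfun {d : ℕ} {ι : Type} [Fintype ι] [Nonempty ι] (M : Set (EN d)) (p : ι → EN d) (ρ : ℝ)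
    (s b : ℝ) (y : EN d) : ℝ :=
  min (max |Metric.infDist y M - s| (ρ / 2))
    (Finset.univ.inf' Finset.univ_nonempty
      fun i => max |Metric.infDist y M - s| |dist y (p i) - b|)

section SfunSec

variable {d : ℕ} {ι : Type} [Fintype ι] [Nonempty ι] (M : Set (EN d)) (p : ι → EN d) (ρ : ℝ)
    (s b : ℝ)

lemma Sfun_ge (y : EN d) : |Metric.infDist y M - s| ≤ Sfun M p ρ s b y := by
  refine le_min (le_max_left _ _) ?_
  exact Finset.le_inf' _ _ fun i _ => le_max_left _ _

lemma Sfun_nonneg (y : EN d) : 0 ≤ Sfun M p ρ s b y := (abs_nonneg _).trans (Sfun_ge M p ρ s b y)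

lemma Sfun_le (y : EN d) : Sfun M p ρ s b y ≤ max |Metric.infDist y M - s| (ρ / 2) :=
  min_le_left _ _

lemma Sfun_le' (y : EN d) (i : ι) :
    Sfun M p ρ s b y ≤ max |Metric.infDist y M - s| |dist y (p i) - b| :=
  (min_le_right _ _).trans (Finset.inf'_le _ (Finset.mem_univ i))

lemma Sfun_cases (y : EN d) : Sfun M p ρ s b y = max |Metric.infDist y M - s| (ρ / 2) ∨
    ∃ i, Sfun M p ρ s b y = max |Metric.infDist y M - s| |dist y (p i) - b| := by
  rcases min_choice (max |Metric.infDist y M - s| (ρ / 2))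
    (Finset.univ.inf' Finset.univ_nonempty
      fun i => max |Metric.infDist y M - s| |dist y (p i) - b|) with h | h
  · left; exact h
  · right
    obtain ⟨i, -, hi⟩ := Finset.exists_mem_eq_inf' (Finset.univ_nonempty (α := ι))
      (fun i => max |Metric.infDist y M - s| |dist y (p i) - b|)
    exact ⟨i, h.trans hi⟩

lemma Sfun_lip_aux (y z : EN d) : Sfun M p ρ s b y ≤ Sfun M p ρ s b z + ‖y - z‖ := by
  have h1 : |Metric.infDist y M - s| ≤ |Metric.infDist z M - s| + ‖y - z‖ := by
    have := (Metric.lipschitz_infDist_pt M).dist_le_mul y z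
    rw [NNReal.coe_one, one_mul, Real.dist_eq, dist_eq_norm] at this
    calc _ = |(Metric.infDist z M - s) + (Metric.infDist y M - Metric.infDist z M)| := by
          congr 1; ring
      _ ≤ _ := (abs_add_le _ _).trans (by gcongr)
  have h2 : ∀ i, |dist y (p i) - b| ≤ |dist z (p i) - b| + ‖y - z‖ := by
    intro i
    have : |dist y (p i) - dist z (p i)| ≤ dist y z := abs_dist_sub_le _ _ _
    rw [dist_eq_norm y z] at this
    calc _ = |(dist z (p i) - b) + (dist y (p i) - dist z (p i))| := by
          congr 1; ring
      _ ≤ _ := (abs_add_le _ _).trans (by gcongr)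
  rcases Sfun_cases M p ρ s b z with h | ⟨i, h⟩
  · rw [h]
    refine (Sfun_le M p ρ s b y).trans (max_le ?_ ?_)
    · exact h1.trans (by gcongr; exact le_max_left _ _)
    · have := norm_nonneg (y - z)
      linarith [le_max_right |Metric.infDist z M - s| (ρ / 2)]
  · rw [h]
    refine (Sfun_le' M p ρ s b y i).trans (max_le ?_ ?_)
    · exact h1.trans (by gcongr; exact le_max_left _ _)
    · exact (h2 i).trans (by gcongr; exact le_max_right _ _)

lemma Sfun_lip (y z : EN d) : |Sfun M p ρ s b y - Sfun M p ρ s b z| ≤ ‖y - z‖ := by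
  rw [abs_le]
  have h1 := Sfun_lip_aux M p ρ s b y z
  have h2 := Sfun_lip_aux M p ρ s b z y
  rw [norm_sub_rev] at h2
  constructor <;> linarith

lemma Sfun_cont : Continuous fun x : (ℝ × ℝ) × EN d => Sfun M p ρ x.1.1 x.1.2 x.2 := by
  have h0 : Continuous fun x : (ℝ × ℝ) × EN d => |Metric.infDist x.2 M - x.1.1| :=
    (((Metric.continuous_infDist_pt M).comp continuous_snd).sub
      (continuous_fst.comp continuous_fst)).abs
  unfold Sfun
  refine (h0.max continuous_const).min ?_
  refine Continuous.finset_inf'_apply _ fun i _ => h0.max ?_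
  fun_prop

end SfunSec

lemma aux_ratio {a a' S S' e : ℝ} (hS : 0 < S) (hS' : 0 < S') (h1 : |a - a'| ≤ e)
    (h2 : |S - S'| ≤ e) (ha' : |a'| ≤ S') : |a / S - a' / S'| ≤ 2 * e / S := by
  have : a / S - a' / S' = ((a - a') + (a' / S') * (S' - S)) / S := by
    field_simp; ring
  rw [this, abs_div, abs_of_pos hS]
  gcongr
  refine (abs_add_le _ _).trans ?_
  rw [abs_mul, abs_div, abs_of_pos hS', abs_sub_comm S' S]
  have h3 : |a'| / S' ≤ 1 := (div_le_one hS').2 ha'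
  have := mul_le_mul h3 h2 (abs_nonneg _) zero_le_one
  linarith

/-- The singular projections onto `M`. -/
lemma aux_proj {d m : ℕ} {M : Set (EN d)} (hne : M.Nonempty) (hc : IsCompact M)
    (hconn : IsConnected M) (hM : IsSubmanifoldDim d m M) :
    ∃ (ρ : ℝ) (n : ℕ) (p : Fin (n + 1) → EN d) (C : ℝ), 0 < ρ ∧ 0 ≤ C ∧
      ∀ s ∈ Icc ρ (2 * ρ), ∀ b ∈ Icc (3 * ρ) (4 * ρ), ∃ Φ : EN d → EN d,
        (∀ y, Φ y ∈ M) ∧ (∀ y ∈ M, Φ y = y) ∧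
        ∀ y z, 0 < Sfun M p ρ s b y → ‖Φ y - Φ z‖ ≤ C / Sfun M p ρ s b y * ‖y - z‖ := by
  classical
  obtain ⟨δ, hδ, r, hr, hrid, hrL⟩ := aux_retract hM hc hne
  have hpath := aux_paths hconn hδ hr hrid hrL
  set ρ := δ / 4 with hρ
  have hρ0 : 0 < ρ := by positivity
  obtain ⟨n, p, hpM, hnet⟩ : ∃ (n : ℕ) (p : Fin (n + 1) → EN d), (∀ i, p i ∈ M) ∧
      ∀ q ∈ M, ∃ i, dist q (p i) < ρ := by
    obtain ⟨t, ht, htf, hcov⟩ := hc.finite_cover_balls hρ0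
    obtain ⟨q₀, hq₀⟩ := hne
    have : Nonempty t := by
      have := hcov hq₀
      simp only [mem_iUnion] at this
      obtain ⟨x, hx, -⟩ := this
      exact ⟨⟨x, hx⟩⟩
    have : Fintype t := htf.fintype
    obtain ⟨n, hn⟩ : ∃ n, Fintype.card t = n + 1 :=
      Nat.exists_eq_succ_of_ne_zero (Fintype.card_ne_zero)
    let e : Fin (n + 1) ≃ t := (Fintype.equivFinOfCardEq hn).symm
    refine ⟨n, fun i => e i, fun i => ht (e i).2, fun q hq => ?_⟩
    have := hcov hq
    simp only [mem_iUnion] at this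
    obtain ⟨x, hx, hqx⟩ := this
    exact ⟨e.symm ⟨x, hx⟩, by simpa using hqx⟩
  set q₀ := p 0 with hq₀
  choose K γ hγL hγM hγ0 hγ1 using fun i => hpath (p i) (hpM i) q₀ (hpM 0)
  obtain ⟨L, hL0, hL⟩ : ∃ L : ℝ, 0 ≤ L ∧ ∀ i, (K i : ℝ) ≤ L :=
    ⟨∑ i, (K i : ℝ), by positivity, fun i =>
      Finset.single_le_sum (f := fun i => (K i : ℝ)) (fun _ _ => by positivity) (Finset.mem_univ i)⟩
  obtain ⟨Δ, hΔ⟩ := hc.isBounded.exists_norm_le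
  have hΔ0 : 0 ≤ Δ := (norm_nonneg _).trans (hΔ q₀ (hpM 0))
  set C := 8 * Δ + (24 * ρ + 2 * L) with hCdef
  refine ⟨ρ, n, p, C, hρ0, by positivity, fun s hs b hb => ?_⟩
  set S := Sfun M p ρ s b with hSdef
  set σ : EN d → ℝ := fun y => Metric.infDist y M - s with hσ
  set k : EN d → ℝ := fun y => 1 + σ y / S y with hk
  set mem : EN d → Set (Fin (n + 1)) := fun y => {i | dist y (p i) < b} with hmem
  -- anchor depends only on the membership set
  let anc : Set (Fin (n + 1)) → Fin (n + 1) := fun A => if h : A.Nonempty then h.choose else 0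
  have hanc : ∀ A : Set (Fin (n + 1)), A.Nonempty → anc A ∈ A := fun A hA => by
    simp only [anc, dif_pos hA]; exact hA.choose_spec
  let Γ : Fin (n + 1) → EN d → EN d := fun i y =>
    r (y + min (k y) 1 • (p i - y)) + (γ i (k y - 1) - p i)
  let Φ : EN d → EN d := fun y => if (mem y).Nonempty then Γ (anc (mem y)) y else q₀
  have hσS : ∀ y, |σ y| ≤ S y := fun y => Sfun_ge M p ρ s b y
  have hΓ1 : ∀ i y, k y ≤ 1 → Γ i y = r (y + k y • (p i - y)) := by
    intro i y h
    simp only [Γ, min_eq_left h, hγ0 i (k y - 1) (by linarith), sub_self, add_zero]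
  have hΓ2 : ∀ i y, 1 ≤ k y → Γ i y = γ i (k y - 1) := by
    intro i y h
    simp only [Γ, min_eq_right h, one_smul, add_sub_cancel, hrid _ (hpM i)]
  have hk0 : ∀ y, 0 ≤ k y := fun y => by
    have : |σ y / S y| ≤ 1 := by
      rw [abs_div, abs_of_nonneg (Sfun_nonneg M p ρ s b y)]
      exact div_le_one_of_le₀ (hσS y) (Sfun_nonneg M p ρ s b y)
    have := (abs_le.1 this).1
    simp only [hk]; linarith
  have hΓM : ∀ i y, Γ i y ∈ M := by
    intro i y
    rcases le_total (k y) 1 with h | h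
    · rw [hΓ1 i y h]; exact hr _
    · rw [hΓ2 i y h]; exact hγM _ _
  have hΦM : ∀ y, Φ y ∈ M := by
    intro y
    simp only [Φ]
    split_ifs
    · exact hΓM _ _
    · exact hpM 0
  have hdist0 : ∀ y, 0 ≤ Metric.infDist y M := fun y => Metric.infDist_nonneg
  -- saturated cases
  have hsat1 : ∀ y, σ y < 0 → S y = |σ y| → Φ y = r y := by
    intro y h1 h2
    have hky : k y = 0 := by
      simp only [hk, h2, abs_of_neg h1]
      rw [div_neg, div_self h1.ne]; ring
    have hne' : (mem y).Nonempty := by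
      have : Metric.infDist y M < 2 * ρ := by
        have : Metric.infDist y M - s < 0 := h1
        linarith [hs.2]
      obtain ⟨q, hq, hyq⟩ := (Metric.infDist_lt_iff hne).1 this
      obtain ⟨i, hi⟩ := hnet q hq
      refine ⟨i, ?_⟩
      have := dist_triangle y q (p i)
      simp only [hmem, Set.mem_ofPred_eq]
      linarith [hb.1]
    simp only [Φ, if_pos hne']
    rw [hΓ1 _ _ (by rw [hky]; exact zero_le_one), hky, zero_smul, add_zero]
  have hsat2 : ∀ y, 0 < σ y → S y = |σ y| → Φ y = q₀ := by
    intro y h1 h2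
    have hky : k y = 2 := by
      simp only [hk, h2, abs_of_pos h1]
      rw [div_self h1.ne']; norm_num
    simp only [Φ]
    split_ifs
    · rw [hΓ2 _ _ (by rw [hky]; norm_num), hky]
      exact hγ1 _ _ (by norm_num)
    · rfl
  refine ⟨Φ, hΦM, ?_, ?_⟩
  · intro y hy
    have h0 : Metric.infDist y M = 0 := Metric.infDist_zero_of_mem hy
    have h1 : σ y = -s := by simp only [hσ, h0, zero_sub]
    have hsp : 0 < s := hρ0.trans_le hs.1
    rw [hsat1 y (by rw [h1]; linarith) ?_, hrid y hy]
    refine le_antisymm ?_ (hσS y)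
    refine (Sfun_le M p ρ s b y).trans (max_le le_rfl ?_)
    change ρ / 2 ≤ |σ y|
    rw [h1, abs_neg, abs_of_pos hsp]
    linarith [hs.1]
  · intro y z hSy
    change 0 < S y at hSy
    set e := ‖y - z‖ with he
    have he0 : 0 ≤ e := norm_nonneg _
    have hSlip : |S y - S z| ≤ e := Sfun_lip M p ρ s b y z
    have hσlip : |σ y - σ z| ≤ e := by
      have := (Metric.lipschitz_infDist_pt M).dist_le_mul y z
      rw [NNReal.coe_one, one_mul, Real.dist_eq, dist_eq_norm] at this
      simpa [hσ] using this
    suffices hmain : ‖Φ y - Φ z‖ * S y ≤ C * e by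
      rw [div_mul_eq_mul_div, le_div_iff₀ hSy]; exact hmain
    by_cases hfar : S y / 4 ≤ e
    · have h1 : ‖Φ y - Φ z‖ ≤ 2 * Δ := by
        refine (norm_sub_le _ _).trans ?_
        have := hΔ _ (hΦM y)
        have := hΔ _ (hΦM z)
        linarith
      calc ‖Φ y - Φ z‖ * S y ≤ (2 * Δ) * (4 * e) := by
            gcongr
            linarith
        _ = (8 * Δ) * e := by ring
        _ ≤ C * e := by
            gcongr
            have : 0 ≤ 24 * ρ + 2 * L := by positivity
            linarith
    push Not at hfar
    have hSz : 0 < S z := by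
      have := (abs_le.1 hSlip).2
      linarith
    have hSz' : 3 / 4 * S y < S z := by
      have := (abs_le.1 hSlip).2
      linarith
    by_cases hsame : mem y = mem z
    · by_cases hmne : (mem y).Nonempty
      · have hmne' : (mem z).Nonempty := hsame ▸ hmne
        simp only [Φ, if_pos hmne, if_pos hmne', ← hsame]
        set i := anc (mem y) with hi
        have hiy : dist y (p i) < b := hanc _ hmne
        have hiz : dist z (p i) < b := by
          have : i ∈ mem z := by rw [← hsame]; exact hanc _ hmne
          exact this
        have hkk : |k y - k z| ≤ 2 * e / S y := by
          have := aux_ratio hSy hSz hσlip hSlip (hσS z)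
          simpa [hk] using this
        have hmm : |min (k y) 1 - min (k z) 1| ≤ 2 * e / S y := by
          refine (abs_min_sub_min_le_max _ _ _ _).trans (max_le hkk ?_)
          simp; positivity
        have htube : ∀ x, dist x (p i) < b → Metric.infDist (x + min (k x) 1 • (p i - x)) M < δ := by
          intro x hx
          refine (Metric.infDist_le_dist_of_mem (hpM i)).trans_lt ?_
          rw [dist_eq_norm]
          have : x + min (k x) 1 • (p i - x) - p i = (1 - min (k x) 1) • (x - p i) := by
            module
          rw [this, norm_smul, Real.norm_eq_abs, ← dist_eq_norm]
          have h1 : |1 - min (k x) 1| ≤ 1 := by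
            rw [abs_le]
            have := le_min (hk0 x) zero_le_one
            have := min_le_right (k x) 1
            constructor <;> linarith
          calc _ ≤ 1 * dist x (p i) := by gcongr
            _ < δ := by rw [one_mul, show δ = 4 * ρ by rw [hρ]; ring]; linarith [hb.2]
        have hA : ‖(y + min (k y) 1 • (p i - y)) - (z + min (k z) 1 • (p i - z))‖
            ≤ e + 2 * e / S y * (4 * ρ) := by
          have : (y + min (k y) 1 • (p i - y)) - (z + min (k z) 1 • (p i - z)) =
            (1 - min (k y) 1) • (y - z) + (min (k y) 1 - min (k z) 1) • (p i - z) := by module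
          rw [this]
          refine (norm_add_le _ _).trans ?_
          rw [norm_smul, norm_smul, Real.norm_eq_abs, Real.norm_eq_abs, ← he]
          have h1 : |1 - min (k y) 1| ≤ 1 := by
            rw [abs_le]
            have := le_min (hk0 y) zero_le_one
            have := min_le_right (k y) 1
            constructor <;> linarith
          have h2 : ‖p i - z‖ ≤ 4 * ρ := by
            rw [← dist_eq_norm, dist_comm]; linarith [hb.2]
          calc _ ≤ 1 * e + 2 * e / S y * (4 * ρ) := by gcongr
            _ = _ := by ring
        have hB := hrL _ _ (htube y hiy) (htube z hiz)
        have hG : ‖γ i (k y - 1) - γ i (k z - 1)‖ ≤ L * (2 * e / S y) := by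
          have := (hγL i).dist_le_mul (k y - 1) (k z - 1)
          rw [dist_sub_right, Real.dist_eq, dist_eq_norm] at this
          refine this.trans ?_
          gcongr
          exact hL i
        have hT : ‖Γ i y - Γ i z‖ ≤ 2 * (e + 2 * e / S y * (4 * ρ)) + L * (2 * e / S y) := by
          have : Γ i y - Γ i z = (r (y + min (k y) 1 • (p i - y)) - r (z + min (k z) 1 • (p i - z)))
            + (γ i (k y - 1) - γ i (k z - 1)) := by simp only [Γ]; abel
          rw [this]
          refine (norm_add_le _ _).trans ?_
          gcongr
          exact hB.trans (by gcongr)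
        have hSle : S y ≤ 4 * ρ := by
          refine (Sfun_le M p ρ s b y).trans (max_le ?_ (by linarith))
          have h1 : Metric.infDist y M < 4 * ρ :=
            (Metric.infDist_le_dist_of_mem (hpM i)).trans_lt (hiy.trans_le hb.2)
          rw [abs_le]
          constructor <;> linarith [hdist0 y, hs.1, hs.2]
        calc ‖Γ i y - Γ i z‖ * S y
            ≤ (2 * (e + 2 * e / S y * (4 * ρ)) + L * (2 * e / S y)) * S y := by gcongr
          _ = 2 * e * S y + 16 * ρ * e + 2 * L * e := by field_simp; ring
          _ ≤ 2 * e * (4 * ρ) + 16 * ρ * e + 2 * L * e := by gcongr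
          _ = (24 * ρ + 2 * L) * e := by ring
          _ ≤ C * e := by
            gcongr
            linarith
      · have hmne' : ¬ (mem z).Nonempty := hsame ▸ hmne
        simp only [Φ, if_neg hmne, if_neg hmne', sub_self, norm_zero, zero_mul]
        positivity
    · obtain ⟨i, hi⟩ : ∃ i, ¬ (dist y (p i) < b ↔ dist z (p i) < b) := by
        by_contra hcon
        push Not at hcon
        apply hsame
        ext i
        simpa [hmem] using hcon i
      have hd : |dist y (p i) - dist z (p i)| ≤ e := by
        rw [he, ← dist_eq_norm]; exact abs_dist_sub_le _ _ _
      have hd' := abs_le.1 hd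
      have hby : |dist y (p i) - b| ≤ e := by
        rw [abs_le]
        by_cases h1 : dist y (p i) < b <;> by_cases h2 : dist z (p i) < b
        · simp [h1, h2] at hi
        · push Not at h2; constructor <;> linarith
        · push Not at h1; constructor <;> linarith
        · simp [h1, h2] at hi
      have hbz : |dist z (p i) - b| ≤ e := by
        rw [abs_le]
        by_cases h1 : dist y (p i) < b <;> by_cases h2 : dist z (p i) < b
        · simp [h1, h2] at hi
        · push Not at h2; constructor <;> linarith
        · push Not at h1; constructor <;> linarith
        · simp [h1, h2] at hi
      have hSy' : S y = |σ y| := by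
        refine le_antisymm ?_ (hσS y)
        rcases le_max_iff.1 (Sfun_le' M p ρ s b y i) with h | h
        · exact h
        · have : S y ≤ |dist y (p i) - b| := h
          linarith
      have hSz'' : S z = |σ z| := by
        refine le_antisymm ?_ (hσS z)
        rcases le_max_iff.1 (Sfun_le' M p ρ s b z i) with h | h
        · exact h
        · have : S z ≤ |dist z (p i) - b| := h
          linarith
      have hσ' := abs_le.1 hσlip
      rcases lt_trichotomy (σ y) 0 with h | h | h
      · have hz : σ z < 0 := by
          rw [hSy', abs_of_neg h] at hfar
          linarith
        rw [hsat1 y h hSy', hsat1 z hz hSz'']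
        have ht : ∀ x, σ x < 0 → Metric.infDist x M < δ := by
          intro x hx
          have : Metric.infDist x M - s < 0 := hx
          have : δ = 4 * ρ := by rw [hρ]; ring
          linarith [hs.2]
        have := hrL y z (ht y h) (ht z hz)
        have hSle : S y ≤ 2 * ρ := by
          rw [hSy', abs_of_neg h]
          simp only [hσ]
          linarith [hdist0 y, hs.2]
        calc ‖r y - r z‖ * S y ≤ 2 * e * (2 * ρ) := by gcongr
          _ = (4 * ρ) * e := by ring
          _ ≤ C * e := by
            gcongr
            linarith
      · rw [hSy', h] at hSy
        simp at hSy
      · have hz : 0 < σ z := by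
          rw [hSy', abs_of_pos h] at hfar
          linarith
        rw [hsat2 y h hSy', hsat2 z hz hSz'']
        simp only [sub_self, norm_zero, zero_mul]
        positivity


lemma aux_one_dim (a c : ℝ) : ∃ K : ℝ≥0∞, K ≠ ⊤ ∧ ∀ τ : ℝ,
    ∫⁻ s in Icc a c, (ENNReal.ofReal |τ - s|) ^ (-(1 / 2) : ℝ) ≤ K := by
  let k : ℝ → ℝ≥0∞ := (Ioc (0 : ℝ) 1).indicator fun u => ENNReal.ofReal (u ^ (-(1 / 2) : ℝ))
  have hkm : Measurable k := by
    refine Measurable.indicator ?_ measurableSet_Ioc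
    fun_prop
  have hk : ∫⁻ u, k u ≠ ⊤ := by
    have h1 : IntervalIntegrable (fun x : ℝ => x ^ (-(1 / 2) : ℝ)) volume 0 1 :=
      intervalIntegral.intervalIntegrable_rpow' (by norm_num)
    rw [intervalIntegrable_iff_integrableOn_Ioc_of_le zero_le_one] at h1
    have h2 := h1.2
    rw [hasFiniteIntegral_iff_norm] at h2
    rw [lintegral_indicator measurableSet_Ioc]
    refine ne_of_lt (lt_of_le_of_lt (lintegral_mono fun u => ?_) h2)
    exact ENNReal.ofReal_le_ofReal (le_abs_self _)
  have hpt : ∀ u : ℝ, u ≠ 0 →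
      (ENNReal.ofReal |u|) ^ (-(1 / 2) : ℝ) ≤ k u + k (-u) + 1 := by
    intro u hu
    have hu' : 0 < |u| := abs_pos.2 hu
    by_cases h1 : 1 < |u|
    · have : (ENNReal.ofReal |u|) ^ (-(1 / 2) : ℝ) ≤ 1 := by
        apply ENNReal.rpow_le_one_of_one_le_of_neg
        · rw [← ENNReal.ofReal_one]; exact ENNReal.ofReal_le_ofReal h1.le
        · norm_num
      exact this.trans le_add_self
    · push Not at h1
      rw [ENNReal.ofReal_rpow_of_pos hu']
      refine le_trans ?_ le_self_add
      rcases lt_or_gt_of_ne hu with h | h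
      · rw [abs_of_neg h] at h1 ⊢
        refine le_trans (le_of_eq ?_) le_add_self
        simp only [k]
        rw [indicator_of_mem]
        exact ⟨by linarith, h1⟩
      · rw [abs_of_pos h] at h1 ⊢
        refine le_trans (le_of_eq ?_) le_self_add
        simp only [k]
        rw [indicator_of_mem]
        exact ⟨by linarith, h1⟩
  refine ⟨(∫⁻ u, k u) + (∫⁻ u, k u) + volume (Icc a c), ?_, fun τ => ?_⟩
  · simp [hk]
  have hae : ∀ᵐ s ∂(volume.restrict (Icc a c)), (ENNReal.ofReal |τ - s|) ^ (-(1 / 2) : ℝ) ≤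
      k (τ - s) + k (s - τ) + 1 := by
    have : ∀ᵐ s : ℝ ∂(volume.restrict (Icc a c)), s ≠ τ := by
      apply ae_restrict_of_ae
      simp [ae_iff]
    filter_upwards [this] with s hs
    have := hpt (τ - s) (sub_ne_zero.2 hs.symm)
    rwa [neg_sub] at this
  have hkm2 : Measurable fun s : ℝ => k (τ - s) :=
    hkm.comp (measurable_const.sub measurable_id)
  refine (lintegral_mono_ae hae).trans ?_
  rw [lintegral_add_right _ measurable_const, lintegral_add_left hkm2]
  refine add_le_add (add_le_add ?_ ?_) ?_
  · refine (setLIntegral_le_lintegral _ _).trans (le_of_eq ?_)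
    exact lintegral_sub_left_eq_self k τ
  · refine (setLIntegral_le_lintegral _ _).trans (le_of_eq ?_)
    exact lintegral_sub_right_eq_self k τ
  · simp

lemma aux_inv_max (x y : ℝ≥0∞) (hx : x ≠ ⊤) (hy : y ≠ ⊤) :
    (max x y)⁻¹ ≤ x ^ (-(1 / 2) : ℝ) * y ^ (-(1 / 2) : ℝ) := by
  by_cases h : max x y = 0
  · have hx0 : x = 0 := le_antisymm (h ▸ le_max_left _ _) bot_le
    have hy0 : y = 0 := le_antisymm (h ▸ le_max_right _ _) bot_le
    subst hx0; subst hy0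
    rw [ENNReal.zero_rpow_of_neg (by norm_num)]; simp
  · have ht : max x y ≠ ⊤ := by
      intro h; rcases max_choice x y with h' | h' <;> rw [h'] at h <;> contradiction
    have : (max x y)⁻¹ = (max x y) ^ (-(1 / 2) : ℝ) * (max x y) ^ (-(1 / 2) : ℝ) := by
      rw [← ENNReal.rpow_add _ _ h ht, ← ENNReal.rpow_neg_one]; norm_num
    rw [this]
    simp only [ENNReal.rpow_neg]
    gcongr
    · exact le_max_left _ _
    · exact le_max_right _ _

/-- Averaging: the inverse of `Sfun` is integrable over the parameters, uniformly in `y`. -/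
lemma aux_avg {d : ℕ} {ι : Type} [Fintype ι] [Nonempty ι] (M : Set (EN d)) (p : ι → EN d)
    {ρ : ℝ} (hρ : 0 < ρ) : ∃ A : ℝ≥0∞, A ≠ ⊤ ∧ ∀ y : EN d,
      ∫⁻ q in (Icc ρ (2 * ρ) ×ˢ Icc (3 * ρ) (4 * ρ)),
        (ENNReal.ofReal (Sfun M p ρ q.1 q.2 y))⁻¹ ≤ A := by
  obtain ⟨K₁, hK₁, h₁⟩ := aux_one_dim ρ (2 * ρ)
  obtain ⟨K₂, hK₂, h₂⟩ := aux_one_dim (3 * ρ) (4 * ρ)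
  set Bx : Set (ℝ × ℝ) := Icc ρ (2 * ρ) ×ˢ Icc (3 * ρ) (4 * ρ) with hBx
  have hvol : volume Bx ≠ ⊤ := by
    rw [hBx, Measure.volume_eq_prod, Measure.prod_prod]
    simp [ENNReal.mul_eq_top]
  refine ⟨(ENNReal.ofReal (ρ / 2))⁻¹ * volume Bx + ∑ _i : ι, K₁ * K₂, ?_, fun y => ?_⟩
  · have hr : (ENNReal.ofReal (ρ / 2))⁻¹ ≠ ⊤ := by simp [hρ]
    refine ENNReal.add_ne_top.2 ⟨ENNReal.mul_ne_top hr hvol, ?_⟩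
    exact ENNReal.sum_ne_top.2 fun i _ => ENNReal.mul_ne_top hK₁ hK₂
  set τ := Metric.infDist y M
  have hm : ∀ t : ℝ, Measurable fun s : ℝ => (ENNReal.ofReal |t - s|) ^ (-(1 / 2) : ℝ) := by
    intro t
    fun_prop
  have hpt : ∀ q : ℝ × ℝ, (ENNReal.ofReal (Sfun M p ρ q.1 q.2 y))⁻¹ ≤
      (ENNReal.ofReal (ρ / 2))⁻¹ + ∑ i : ι, (ENNReal.ofReal |τ - q.1|) ^ (-(1 / 2) : ℝ) *
        (ENNReal.ofReal |dist y (p i) - q.2|) ^ (-(1 / 2) : ℝ) := by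
    intro q
    rcases Sfun_cases M p ρ q.1 q.2 y with h | ⟨i, h⟩
    · refine le_trans ?_ le_self_add
      rw [h]
      exact ENNReal.inv_le_inv.2 (ENNReal.ofReal_le_ofReal (le_max_right _ _))
    · refine le_trans ?_ le_add_self
      refine le_trans ?_ (Finset.single_le_sum (fun _ _ => bot_le) (Finset.mem_univ i))
      rw [h, ENNReal.ofReal_max]
      exact aux_inv_max _ _ ENNReal.ofReal_ne_top ENNReal.ofReal_ne_top
  refine (lintegral_mono hpt).trans ?_
  rw [lintegral_add_left measurable_const, lintegral_finsetSum]
  · gcongr with i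
    · simp
    · rw [hBx, Measure.volume_eq_prod, ← Measure.prod_restrict,
        lintegral_prod_mul (hm _).aemeasurable (hm _).aemeasurable]
      exact mul_le_mul' (h₁ _) (h₂ _)
  · intro i _
    exact ((hm _).comp measurable_fst).mul ((hm _).comp measurable_snd)


lemma aux_choice_abs {Q X : Type*} [MeasurableSpace Q] [MeasurableSpace X] (ν : Measure Q)
    [IsFiniteMeasure ν] (hν : ν ≠ 0) (μ : Measure X) [IsFiniteMeasure μ] (F : Q → X → ℝ≥0∞)
    (hF : Measurable (Function.uncurry F)) (g : X → ℝ≥0∞) (hg : Measurable g) {A : ℝ≥0∞}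
    (hA : A ≠ ⊤) (hav : ∀ x, ∫⁻ q, F q x ∂ν ≤ A) {P : Q → Prop} (hP : ∀ᵐ q ∂ν, P q) :
    ∃ q, P q ∧ (∀ᵐ x ∂μ, F q x < ⊤) ∧
      ∫⁻ x, g x * F q x ∂μ ≤ A / ν univ * ∫⁻ x, g x ∂μ := by
  have hF1 : ∀ q, Measurable (F q) := fun q => hF.comp measurable_prodMk_left
  have hF2 : ∀ x, Measurable fun q => F q x := fun x => hF.comp measurable_prodMk_right
  have h1 : ∫⁻ q, ∫⁻ x, F q x ∂μ ∂ν ≠ ⊤ := by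
    rw [lintegral_lintegral_swap hF.aemeasurable]
    refine ((lintegral_mono fun x => hav x).trans_lt ?_).ne
    rw [lintegral_const]
    exact ENNReal.mul_lt_top hA.lt_top (measure_lt_top _ _)
  have h2 : ∀ᵐ q ∂ν, ∫⁻ x, F q x ∂μ < ⊤ := ae_lt_top hF.lintegral_prod_right' h1
  have hG : Measurable (Function.uncurry fun q x => g x * F q x) :=
    (hg.comp measurable_snd).mul hF
  have h3 : ∫⁻ q, ∫⁻ x, g x * F q x ∂μ ∂ν ≤ A * ∫⁻ x, g x ∂μ := by
    rw [lintegral_lintegral_swap hG.aemeasurable, mul_comm, ← lintegral_mul_const _ hg]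
    refine lintegral_mono fun x => ?_
    rw [lintegral_const_mul _ (hF2 x)]
    gcongr
    exact hav x
  obtain ⟨q, hq, hqle⟩ := exists_notMem_null_le_laverage (μ := ν)
    (f := fun q => ∫⁻ x, g x * F q x ∂μ) hν
    hG.lintegral_prod_right'.aemeasurable (ae_iff.1 (hP.and h2))
  simp only [Set.mem_ofPred_eq, not_not] at hq
  refine ⟨q, hq.1, ae_lt_top (hF1 q) hq.2.ne, hqle.trans ?_⟩
  rw [laverage_eq]
  calc _ ≤ (A * ∫⁻ x, g x ∂μ) / ν univ := by gcongr
    _ = _ := by rw [ENNReal.mul_div_right_comm]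

lemma aux_choice {d : ℕ} {ι : Type} [Fintype ι] [Nonempty ι] (M : Set (EN d)) (p : ι → EN d)
    {ρ : ℝ} (hρ : 0 < ρ) : ∃ A : ℝ≥0∞, A ≠ ⊤ ∧ ∀ (N : ℕ) (μ : Measure (EN N)) [IsFiniteMeasure μ]
      (v : EN N → EN d) (g : EN N → ℝ≥0∞), AEMeasurable v μ → AEMeasurable g μ →
      ∃ s ∈ Icc ρ (2 * ρ), ∃ b ∈ Icc (3 * ρ) (4 * ρ),
        (∀ᵐ x ∂μ, 0 < Sfun M p ρ s b (v x)) ∧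
        ∫⁻ x, g x * (ENNReal.ofReal (Sfun M p ρ s b (v x)))⁻¹ ∂μ ≤ A * ∫⁻ x, g x ∂μ := by
  obtain ⟨A, hA, hav⟩ := aux_avg M p hρ
  have hvol : volume (Icc ρ (2 * ρ) ×ˢ Icc (3 * ρ) (4 * ρ)) ≠ ⊤ := by
    rw [Measure.volume_eq_prod, Measure.prod_prod]
    simp [ENNReal.mul_eq_top]
  have hvol0 : volume (Icc ρ (2 * ρ) ×ˢ Icc (3 * ρ) (4 * ρ)) ≠ 0 := by
    rw [Measure.volume_eq_prod, Measure.prod_prod, Real.volume_Icc, Real.volume_Icc]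
    simp only [ne_eq, mul_eq_zero, ENNReal.ofReal_eq_zero, not_or, not_le]
    constructor <;> linarith
  have hBm : MeasurableSet (Icc ρ (2 * ρ) ×ˢ Icc (3 * ρ) (4 * ρ)) :=
    measurableSet_Icc.prod measurableSet_Icc
  refine ⟨A / volume (Icc ρ (2 * ρ) ×ˢ Icc (3 * ρ) (4 * ρ)), (ENNReal.div_lt_top hA hvol0).ne, ?_⟩
  intro N μ _ v g hv hg
  have hF : Measurable (Function.uncurry fun (q : ℝ × ℝ) (x : EN N) =>
      (ENNReal.ofReal (Sfun M p ρ q.1 q.2 (hv.mk v x)))⁻¹) := by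
    have h1 : Measurable fun z : (ℝ × ℝ) × EN N => (z.1, hv.mk v z.2) :=
      measurable_fst.prodMk (hv.measurable_mk.comp measurable_snd)
    exact (((Sfun_cont M p ρ).measurable.comp h1).ennreal_ofReal).inv
  have hfin : IsFiniteMeasure
      (volume.restrict (Icc ρ (2 * ρ) ×ˢ Icc (3 * ρ) (4 * ρ)) : Measure (ℝ × ℝ)) :=
    ⟨by rw [Measure.restrict_apply_univ]; exact hvol.lt_top⟩
  have hne : (volume.restrict (Icc ρ (2 * ρ) ×ˢ Icc (3 * ρ) (4 * ρ)) : Measure (ℝ × ℝ)) ≠ 0 := by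
    intro h
    rw [Measure.restrict_eq_zero] at h
    exact hvol0 h
  obtain ⟨q, hq, hq1, hq2⟩ := aux_choice_abs _ hne μ _ hF (hg.mk g) hg.measurable_mk hA
    (fun x => hav (hv.mk v x)) (ae_restrict_mem hBm)
  rw [Measure.restrict_apply_univ] at hq2
  refine ⟨q.1, hq.1, q.2, hq.2, ?_, ?_⟩
  · filter_upwards [hq1, hv.ae_eq_mk] with x hx hxv
    rw [hxv]
    simpa only [ENNReal.inv_lt_top, ENNReal.ofReal_pos] using hx
  · rw [lintegral_congr_ae hg.ae_eq_mk]
    refine le_trans (le_of_eq ?_) hq2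
    refine lintegral_congr_ae ?_
    filter_upwards [hv.ae_eq_mk, hg.ae_eq_mk] with x hx1 hx2
    rw [← hx1, ← hx2]


lemma aux_trans {N : ℕ} {F : Type*} [NormedAddCommGroup F] {f : EN N → F}
    (hf : Integrable f) (e : EN N) :
    Tendsto (fun t : ℝ => ∫⁻ x, ‖f (x + t • e) - f x‖ₑ) (𝓝 0) (𝓝 0) := by
  let c : C(ℝ × EN N, EN N) := ⟨fun q => q.2 + q.1 • e, by fun_prop⟩
  let g : ℝ → C(EN N, EN N) := fun t => c.curry t
  have hg : Continuous g := c.curry.continuous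
  have hgm : ∀ t, MeasurePreserving (g t) (volume : Measure (EN N)) volume := fun t =>
    measurePreserving_add_right volume (t • e)
  have h1 := (tendsto_const_nhds (x := hf.toL1 f) (f := 𝓝 (0:ℝ))).compMeasurePreservingLp
    (hg.tendsto 0) hgm (hgm 0) ENNReal.one_ne_top
  rw [Lp.tendsto_Lp_iff_tendsto_eLpNorm'] at h1
  refine h1.congr fun t => ?_
  rw [eLpNorm_one_eq_lintegral_enorm]
  refine lintegral_congr_ae ?_
  filter_upwards [Lp.coeFn_compMeasurePreserving (hf.toL1 f) (hgm t),
    Lp.coeFn_compMeasurePreserving (hf.toL1 f) (hgm 0),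
    (hgm t).quasiMeasurePreserving.ae_eq_comp hf.coeFn_toL1,
    (hgm 0).quasiMeasurePreserving.ae_eq_comp hf.coeFn_toL1] with x h1 h2 h3 h4
  simp only [Pi.sub_apply]
  rw [h1, h2, h3, h4]
  simp [g, c, ContinuousMap.curry]

lemma aux_shift {N d : ℕ} (f : EN N → EN d) (ψ : EN N → ℝ) (e : EN N) (s : ℝ) :
    ∫ x, ψ (x - s • e) • f x = ∫ x, ψ x • f (x + s • e) := by
  have := integral_add_right_eq_self (μ := volume) (fun x => ψ (x - s • e) • f x) (s • e)
  simpa using this.symm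

lemma aux_hderiv {N d : ℕ} {u : EN N → EN d} (hu : Integrable u) {ψ : EN N → ℝ}
    (hψ : ContDiff ℝ (⊤ : ℕ∞) ψ) (hψc : HasCompactSupport ψ) (e : EN N) (s : ℝ) :
    HasDerivAt (fun s : ℝ => ∫ x, ψ (x - s • e) • u x)
      (∫ x, (- fderiv ℝ ψ (x - s • e) e) • u x) s := by
  have hψcont : Continuous ψ := hψ.continuous
  obtain ⟨Cψ, hCψ⟩ := hψc.exists_bound_of_continuous hψcont
  have hψ1 : ContDiff ℝ 1 ψ := hψ.of_le (by exact_mod_cast le_top)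
  have hfdc : Continuous fun x => fderiv ℝ ψ x e :=
    (hψ1.continuous_fderiv one_ne_zero).clm_apply continuous_const
  obtain ⟨C', hC'⟩ := (hψc.fderiv_apply (𝕜 := ℝ) e).exists_bound_of_continuous hfdc
  have hbi : ∀ s : ℝ, Integrable fun x => ψ (x - s • e) • u x := by
    intro s
    have hc : Continuous fun x : EN N => ψ (x - s • e) := by fun_prop
    exact hu.bdd_smul Cψ hc.aestronglyMeasurable (Eventually.of_forall fun x => hCψ _)
  have hd := hasDerivAt_integral_of_dominated_loc_of_deriv_le (μ := volume) (𝕜 := ℝ)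
    (F := fun (s : ℝ) x => ψ (x - s • e) • u x)
    (F' := fun (s : ℝ) x => (- fderiv ℝ ψ (x - s • e) e) • u x) (x₀ := s) (s := univ)
    (bound := fun x => C' * ‖u x‖) univ_mem
    (Eventually.of_forall fun s => (hbi s).aestronglyMeasurable) (hbi s)
    ?_ ?_ ?_ ?_
  · exact hd.2
  · have hc : Continuous fun x : EN N => - fderiv ℝ ψ (x - s • e) e :=
      (hfdc.comp (by fun_prop : Continuous fun x : EN N => x - s • e)).neg
    exact hc.aestronglyMeasurable.smul hu.1
  · refine Eventually.of_forall fun x s _ => ?_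
    rw [norm_smul, norm_neg]
    gcongr
    exact hC' _
  · exact hu.norm.const_mul _
  · refine Eventually.of_forall fun x s _ => ?_
    have h1 : HasDerivAt (fun s : ℝ => x - s • e) (-e) s := by
      simpa using ((hasDerivAt_id s).smul_const e).const_sub x
    have h2 := ((hψ1.differentiable one_ne_zero) (x - s • e)).hasFDerivAt.comp_hasDerivAt s h1
    simpa using h2.smul_const (u x)


/-- Weak gradients control increments. -/
lemma aux_increment {N d : ℕ} {Ω : Set (EN N)} {u : EN N → EN d} {D : EN N → Mat d N}
    (hu : Integrable u) (hD : Integrable D) (hDm : StronglyMeasurable D)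
    (hw : ∀ φ : EN N → ℝ, ContDiff ℝ (⊤ : ℕ∞) φ → HasCompactSupport φ → tsupport φ ⊆ Ω →
      ∀ y : EN N, ∫ x, fderiv ℝ φ x y • u x = - ∫ x, φ x • D x y)
    {U : Set (EN N)} (hU : IsOpen U) {e : EN N} {t : ℝ} (ht : 0 ≤ t)
    (hUΩ : ∀ x ∈ U, ∀ s ∈ Icc 0 t, x + s • e ∈ Ω) :
    ∀ᵐ x, x ∈ U → u (x + t • e) - u x = ∫ s in (0 : ℝ)..t, D (x + s • e) e := by
  -- joint integrability
  have hDe : Integrable fun x => D x e :=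
    (ContinuousLinearMap.apply ℝ (EN d) e).integrable_comp hD
  have hjoint : Integrable (Function.uncurry fun (x : EN N) (s : ℝ) => D (x + s • e) e)
      (volume.prod (volume.restrict (Ioc 0 t))) := by
    have hm : StronglyMeasurable (Function.uncurry fun (x : EN N) (s : ℝ) => D (x + s • e) e) := by
      have : StronglyMeasurable fun q : EN N × ℝ => D (q.1 + q.2 • e) :=
        hDm.comp_measurable (by fun_prop)
      exact (ContinuousLinearMap.apply ℝ (EN d) e).continuous.comp_stronglyMeasurable this
    refine (integrable_prod_iff' hm.aestronglyMeasurable).2 ⟨?_, ?_⟩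
    · exact Eventually.of_forall fun s => hDe.comp_add_right (s • e)
    · have : ∀ s : ℝ, ∫ x, ‖D (x + s • e) e‖ = ∫ x, ‖D x e‖ := fun s =>
        integral_add_right_eq_self (fun x => ‖D x e‖) (s • e)
      simp only [Function.uncurry_apply_pair, this]
      exact integrable_const _
  have hW : Integrable fun x => ∫ s in (0 : ℝ)..t, D (x + s • e) e := by
    simp only [intervalIntegral.integral_of_le ht]
    exact hjoint.integral_prod_left
  have hut : Integrable fun x => u (x + t • e) := hu.comp_add_right (t • e)
  have key := hU.ae_eq_zero_of_integral_contDiff_smul_eq_zero (μ := volume)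
    (f := fun x => u (x + t • e) - u x - ∫ s in (0 : ℝ)..t, D (x + s • e) e)
    (((hut.sub hu).sub hW).locallyIntegrable.locallyIntegrableOn U) ?_
  · filter_upwards [key] with x hx hxU
    exact sub_eq_zero.1 (hx hxU)
  intro ψ hψ hψc hψU
  have hψcont : Continuous ψ := hψ.continuous
  obtain ⟨Cψ, hCψ⟩ := hψc.exists_bound_of_continuous hψcont
  have hψ1 : ContDiff ℝ 1 ψ := hψ.of_le (by exact_mod_cast le_top)
  have hfdc : Continuous fun x => fderiv ℝ ψ x e :=
    (hψ1.continuous_fderiv one_ne_zero).clm_apply continuous_const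
  obtain ⟨C', hC'⟩ := (hψc.fderiv_apply (𝕜 := ℝ) e).exists_bound_of_continuous hfdc
  have hbi : ∀ {f : EN N → EN d}, Integrable f → ∀ s : ℝ, Integrable fun x => ψ (x - s • e) • f x := by
    intro f hf s
    have hc : Continuous fun x : EN N => ψ (x - s • e) := by fun_prop
    exact hf.bdd_smul Cψ hc.aestronglyMeasurable (Eventually.of_forall fun x => hCψ _)
  -- the function h
  let h : ℝ → EN d := fun s => ∫ x, ψ (x - s • e) • u x
  have hderiv : ∀ s ∈ Icc 0 t, HasDerivAt h (∫ x, ψ (x - s • e) • D x e) s := by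
    intro s hs
    have h2 := aux_hderiv hu hψ hψc e s
    have h3 := hw (fun x => ψ (x - s • e)) (hψ.comp (by fun_prop))
      (hψc.comp_homeomorph (Homeomorph.subRight (s • e))) ?_ e
    · have h4 : ∀ x, fderiv ℝ (fun x => ψ (x - s • e)) x = fderiv ℝ ψ (x - s • e) := fun x =>
        fderiv_comp_sub (s • e)
      simp only [h4] at h3
      have h5 : ∫ x, (- fderiv ℝ ψ (x - s • e) e) • u x = ∫ x, ψ (x - s • e) • D x e := by
        simp only [neg_smul, integral_neg, h3, neg_neg]
      rw [← h5]
      exact h2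
    · intro x hx
      have : x - s • e ∈ tsupport ψ := by
        have := tsupport_comp_subset_preimage ψ (f := fun x : EN N => x - s • e) (by fun_prop) hx
        exact this
      simpa using hUΩ _ (hψU this) s hs
  have hshift := fun (f : EN N → EN d) (s : ℝ) => aux_shift f ψ e s
  have hjoint' : Integrable (Function.uncurry fun (x : EN N) (s : ℝ) => ψ x • D (x + s • e) e)
      (volume.prod (volume.restrict (Ioc 0 t))) := by
    have hc : Continuous fun q : EN N × ℝ => ψ q.1 := by fun_prop
    exact hjoint.bdd_smul Cψ hc.aestronglyMeasurable (Eventually.of_forall fun x => hCψ _)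
  have hFTC : ∫ s in (0 : ℝ)..t, (∫ x, ψ (x - s • e) • D x e) = h t - h 0 := by
    refine intervalIntegral.integral_eq_sub_of_hasDerivAt ?_ ?_
    · rw [uIcc_of_le ht]; exact hderiv
    · rw [intervalIntegrable_iff_integrableOn_Ioc_of_le ht]
      simp only [hshift fun x => D x e]
      exact hjoint'.integral_prod_right
  have hFub : ∫ x, ψ x • ∫ s in (0 : ℝ)..t, D (x + s • e) e =
      ∫ s in (0 : ℝ)..t, (∫ x, ψ (x - s • e) • D x e) := by
    simp only [hshift fun x => D x e, intervalIntegral.integral_of_le ht]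
    rw [← integral_integral_swap hjoint']
    simp only [integral_smul]
  have hbi0 : ∀ {f : EN N → EN d}, Integrable f → Integrable fun x => ψ x • f x := by
    intro f hf
    simpa using hbi hf 0
  simp only [smul_sub]
  have hi1 : Integrable fun x => ψ x • u (x + t • e) - ψ x • u x := (hbi0 hut).sub (hbi0 hu)
  rw [integral_sub hi1 (hbi0 hW), integral_sub (hbi0 hut) (hbi0 hu), hFub,
    hFTC, ← hshift]
  simp [h]


/-- Chain rule inequality, tested. -/
lemma aux_chain {N d : ℕ} {Ω : Set (EN N)} (hΩ : IsOpen Ω) (hΩf : volume Ω ≠ ⊤)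
    {u : EN N → EN d} {D : EN N → Mat d N}
    (hu : Integrable u) (hum : Measurable u) (hD : Integrable D) (hDm : StronglyMeasurable D)
    (hw : ∀ φ : EN N → ℝ, ContDiff ℝ (⊤ : ℕ∞) φ → HasCompactSupport φ → tsupport φ ⊆ Ω →
      ∀ y : EN N, ∫ x, fderiv ℝ φ x y • u x = - ∫ x, φ x • D x y)
    {Ψ : EN d → EN d} {G : EN d → ℝ} {B B' : ℝ} (hΨc : Continuous Ψ) (hΨb : ∀ y, ‖Ψ y‖ ≤ B')
    (hGc : Continuous G) (hGb : ∀ y, G y ≤ B) (hlip : ∀ y z, ‖Ψ y - Ψ z‖ ≤ G y * ‖y - z‖)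
    {φ : EN N → ℝ} (hφ : ContDiff ℝ (⊤ : ℕ∞) φ) (hφc : HasCompactSupport φ)
    (hφΩ : tsupport φ ⊆ Ω) (e : EN N) :
    ‖∫ x in Ω, fderiv ℝ φ x e • Ψ (u x)‖ₑ ≤
      ∫⁻ x, ‖φ x‖ₑ * ENNReal.ofReal (G (u x)) * ‖D x e‖ₑ := by
  have hφcont : Continuous φ := hφ.continuous
  obtain ⟨Cφ, hCφ⟩ := hφc.exists_bound_of_continuous hφcont
  set f : EN N → EN d := Ω.indicator fun x => Ψ (u x) with hf
  have hfint : Integrable f := by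
    rw [hf, integrable_indicator_iff hΩ.measurableSet]
    refine Integrable.mono' (g := fun _ => B') ?_ ?_ ?_
    · exact integrableOn_const hΩf
    · exact (hΨc.measurable.comp hum).aestronglyMeasurable
    · exact Eventually.of_forall fun x => hΨb _
  have hh := aux_hderiv hfint hφ hφc e 0
  set k : EN N → ℝ≥0∞ := fun x => ‖φ x‖ₑ * ENNReal.ofReal (G (u x)) with hk
  have hkm : Measurable k :=
    hφcont.measurable.enorm.mul (hGc.measurable.comp hum).ennreal_ofReal
  set κ : ℝ≥0∞ := ENNReal.ofReal Cφ * ENNReal.ofReal B with hκ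
  have hκt : κ ≠ ⊤ := ENNReal.mul_ne_top ENNReal.ofReal_ne_top ENNReal.ofReal_ne_top
  have hkκ : ∀ x, k x ≤ κ := by
    intro x
    refine mul_le_mul' ?_ (ENNReal.ofReal_le_ofReal (hGb _))
    rw [← ofReal_norm]
    exact ENNReal.ofReal_le_ofReal (hCφ x)
  have hDe : Integrable fun x => D x e :=
    (ContinuousLinearMap.apply ℝ (EN d) e).integrable_comp hD
  have hDem : StronglyMeasurable fun x => D x e :=
    (ContinuousLinearMap.apply ℝ (EN d) e).continuous.comp_stronglyMeasurable hDm
  have htr := aux_trans hDe e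
  -- reduction to an eventual bound
  have hlim := hh.tendsto_slope_zero_right
  have hval : ∫ x, (- fderiv ℝ φ (x - (0 : ℝ) • e) e) • f x =
      - ∫ x in Ω, fderiv ℝ φ x e • Ψ (u x) := by
    rw [← integral_indicator hΩ.measurableSet, ← integral_neg]
    congr 1
    ext1 x
    by_cases hx : x ∈ Ω <;> simp [hf, hx]
  rw [hval] at hlim
  have hlim' := hlim.enorm
  rw [enorm_neg] at hlim'
  refine ENNReal.le_of_forall_pos_le_add fun η hη _ => ?_
  refine le_of_tendsto hlim' ?_
  -- choose the scale
  obtain ⟨δ, hδ, hδΩ⟩ := hφc.isCompact.exists_cthickening_subset_open hΩ hφΩ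
  have hev1 : ∀ᶠ s : ℝ in 𝓝 0, κ * ∫⁻ x, ‖D (x + s • e) e - D x e‖ₑ ≤ η := by
    have : Tendsto (fun s : ℝ => κ * ∫⁻ x, ‖D (x + s • e) e - D x e‖ₑ) (𝓝 0) (𝓝 (κ * 0)) :=
      ENNReal.Tendsto.const_mul htr (Or.inr hκt)
    rw [mul_zero] at this
    exact this.eventually (ge_mem_nhds (by exact_mod_cast hη))
  have hev2 : ∀ᶠ s : ℝ in 𝓝 0, ‖s • e‖ < δ / 2 := by
    have : Tendsto (fun s : ℝ => ‖s • e‖) (𝓝 0) (𝓝 ‖(0 : ℝ) • e‖) :=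
      Continuous.tendsto (by fun_prop) 0
    rw [zero_smul, norm_zero] at this
    exact this.eventually (gt_mem_nhds (by positivity))
  obtain ⟨r, hr, hball⟩ := Metric.eventually_nhds_iff.1 (hev1.and hev2)
  filter_upwards [Ioo_mem_nhdsGT hr] with t ht
  have ht0 : 0 < t := ht.1
  have hsmall : ∀ s ∈ Icc 0 t, κ * ∫⁻ x, ‖D (x + s • e) e - D x e‖ₑ ≤ η ∧ ‖s • e‖ < δ / 2 := by
    intro s hs
    apply hball
    rw [Real.dist_eq, sub_zero, abs_of_nonneg hs.1]
    exact hs.2.trans_lt ht.2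
  have hUΩ : ∀ x ∈ Metric.thickening (δ / 2) (tsupport φ), ∀ s ∈ Icc 0 t, x + s • e ∈ Ω := by
    intro x hx s hs
    apply hδΩ
    apply Metric.thickening_subset_cthickening
    rw [Metric.mem_thickening_iff] at hx ⊢
    obtain ⟨z, hz, hxz⟩ := hx
    refine ⟨z, hz, ?_⟩
    calc dist (x + s • e) z ≤ dist (x + s • e) x + dist x z := dist_triangle _ _ _
      _ < δ := by
        rw [dist_eq_norm, add_sub_cancel_left]
        linarith [(hsmall s hs).2]
  have hinc := aux_increment hu hD hDm hw Metric.isOpen_thickening ht0.le hUΩ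
  have hsub : tsupport φ ⊆ Metric.thickening (δ / 2) (tsupport φ) :=
    Metric.self_subset_thickening (by positivity) _
  have hdiff : (∫ x, φ (x - (0 + t) • e) • f x) - ∫ x, φ (x - (0 : ℝ) • e) • f x =
      ∫ x, φ x • (f (x + t • e) - f x) := by
    have hb : ∀ {g : EN N → EN d}, Integrable g → Integrable fun x => φ x • g x := fun hg =>
      hg.bdd_smul Cφ hφcont.aestronglyMeasurable (Eventually.of_forall fun x => hCφ _)
    rw [zero_add, aux_shift f φ e t]
    simp only [zero_smul, sub_zero, smul_sub]
    rw [integral_sub (hb (hfint.comp_add_right _)) (hb hfint)]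
  rw [hdiff]
  have hpt : ∀ᵐ x, ‖φ x • (f (x + t • e) - f x)‖ₑ ≤
      ∫⁻ s in Ioc 0 t, k x * ‖D (x + s • e) e‖ₑ := by
    filter_upwards [hinc] with x hx
    by_cases hxs : x ∈ tsupport φ
    · have hxU := hsub hxs
      have h1 : x ∈ Ω := hφΩ hxs
      have h2 : x + t • e ∈ Ω := hUΩ x hxU t ⟨ht0.le, le_rfl⟩
      have hm : Measurable fun s : ℝ => ‖D (x + s • e) e‖ₑ :=
        hDem.enorm.comp (by fun_prop)
      rw [lintegral_const_mul _ hm, enorm_smul]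
      simp only [hf, indicator_of_mem h1, indicator_of_mem h2, hk]
      rw [mul_assoc]
      gcongr
      have h3 : ‖Ψ (u (x + t • e)) - Ψ (u x)‖ₑ ≤
          ENNReal.ofReal (G (u x)) * ‖u (x + t • e) - u x‖ₑ := by
        rw [← ofReal_norm, ← ofReal_norm, ← ENNReal.ofReal_mul']
        · rw [norm_sub_rev, norm_sub_rev (u _)]
          exact ENNReal.ofReal_le_ofReal (hlip _ _)
        · exact norm_nonneg _
      refine h3.trans ?_
      gcongr
      rw [hx hxU, intervalIntegral.integral_of_le ht0.le]
      exact enorm_integral_le_lintegral_enorm _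
    · rw [image_eq_zero_of_notMem_tsupport hxs]
      simp
  have hjm : Measurable (Function.uncurry fun (x : EN N) (s : ℝ) => k x * ‖D (x + s • e) e‖ₑ) := by
    refine (hkm.comp measurable_fst).mul ?_
    exact hDem.enorm.comp (by fun_prop : Measurable fun q : EN N × ℝ => q.1 + q.2 • e)
  have hmain : ‖∫ x, φ x • (f (x + t • e) - f x)‖ₑ ≤
      ENNReal.ofReal t * ((∫⁻ x, k x * ‖D x e‖ₑ) + η) := by
    calc _ ≤ ∫⁻ x, ‖φ x • (f (x + t • e) - f x)‖ₑ := enorm_integral_le_lintegral_enorm _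
      _ ≤ ∫⁻ x, ∫⁻ s in Ioc 0 t, k x * ‖D (x + s • e) e‖ₑ := lintegral_mono_ae hpt
      _ = ∫⁻ s in Ioc 0 t, ∫⁻ x, k x * ‖D (x + s • e) e‖ₑ :=
        lintegral_lintegral_swap hjm.aemeasurable
      _ ≤ ∫⁻ s in Ioc 0 t, ((∫⁻ x, k x * ‖D x e‖ₑ) + η) := by
        refine setLIntegral_mono measurable_const fun s hs => ?_
        refine le_trans ?_ (add_le_add le_rfl (hsmall s ⟨hs.1.le, hs.2⟩).1)
        have hm1 : Measurable fun x => k x * ‖D x e‖ₑ := hkm.mul hDem.enorm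
        rw [← lintegral_const_mul' _ _ hκt, ← lintegral_add_left hm1]
        refine lintegral_mono fun x => ?_
        calc k x * ‖D (x + s • e) e‖ₑ ≤ k x * (‖D x e‖ₑ + ‖D (x + s • e) e - D x e‖ₑ) := by
              gcongr
              calc ‖D (x + s • e) e‖ₑ = ‖D x e + (D (x + s • e) e - D x e)‖ₑ := by
                    rw [add_sub_cancel]
                _ ≤ _ := enorm_add_le _ _
          _ ≤ _ := by
              rw [mul_add]
              gcongr
              exact hkκ x
      _ = _ := by
        rw [setLIntegral_const, Real.volume_Ioc, sub_zero, mul_comm]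
  rw [enorm_smul]
  calc _ ≤ ‖t⁻¹‖ₑ * (ENNReal.ofReal t * ((∫⁻ x, k x * ‖D x e‖ₑ) + η)) := by gcongr
    _ = _ := by
      rw [← mul_assoc, ← ofReal_norm, Real.norm_of_nonneg (by positivity),
        ← ENNReal.ofReal_mul (by positivity), inv_mul_cancel₀ ht0.ne', ENNReal.ofReal_one, one_mul]


lemma aux_hilbert {V H : Type*} [AddCommGroup V] [Module ℝ V] [NormedAddCommGroup H]
    [InnerProductSpace ℝ H] [CompleteSpace H] (J : V →ₗ[ℝ] H) (l : V →ₗ[ℝ] ℝ) (C : ℝ)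
    (hl : ∀ v, |l v| ≤ C * ‖J v‖) : ∃ h : H, ∀ v, l v = ⟪h, J v⟫ := by
  obtain ⟨σ, hσ⟩ := J.rangeRestrict.exists_rightInverse_of_surjective J.range_rangeRestrict
  have hσ' : ∀ y : LinearMap.range J, J (σ y) = y := fun y => by
    have := LinearMap.congr_fun hσ y
    exact congrArg Subtype.val this
  let l' : LinearMap.range J →L[ℝ] ℝ := (l.comp σ).mkContinuous C fun y => by
    have := hl (σ y)
    rw [hσ'] at this
    exact this
  obtain ⟨g, hg, -⟩ := exists_extension_norm_eq _ l'
  refine ⟨(InnerProductSpace.toDual ℝ H).symm g, fun v => ?_⟩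
  rw [InnerProductSpace.toDual_symm_apply]
  have h1 : g (J v) = l (σ ⟨J v, LinearMap.mem_range_self J v⟩) := hg ⟨J v, _⟩
  rw [h1]
  have h2 := hl (v - σ ⟨J v, LinearMap.mem_range_self J v⟩)
  rw [map_sub, map_sub, hσ', sub_self, norm_zero, mul_zero] at h2
  exact sub_eq_zero.1 (abs_nonpos_iff.1 h2)

/-- Test functions on `Ω`. -/
def testSub {N : ℕ} (Ω : Set (EN N)) : Submodule ℝ (EN N → ℝ) where
  carrier := {φ | ContDiff ℝ (⊤ : ℕ∞) φ ∧ HasCompactSupport φ ∧ tsupport φ ⊆ Ω}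
  add_mem' := by
    rintro a b ⟨h1, h2, h3⟩ ⟨k1, k2, k3⟩
    exact ⟨h1.add k1, h2.add k2, (tsupport_add a b).trans (union_subset h3 k3)⟩
  zero_mem' := ⟨contDiff_const, HasCompactSupport.zero, by simp [tsupport]⟩
  smul_mem' := by
    rintro c a ⟨h1, h2, h3⟩
    refine ⟨contDiff_const.smul h1, h2.smul_left, ?_⟩
    exact (tsupport_smul_subset_right (fun _ => c) a).trans h3

lemma aux_riesz {N : ℕ} {Ω : Set (EN N)} {g : EN N → ℝ≥0} (hg : Measurable g)
    (hgi : IntegrableOn (fun x => (g x : ℝ)) Ω) (l : testSub Ω →ₗ[ℝ] ℝ) (c : ℝ) (hc : 0 ≤ c)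
    (hl : ∀ φ : testSub Ω, |l φ| ≤ c * ∫ x in Ω, |φ.1 x| * g x) :
    ∃ F : EN N → ℝ, IntegrableOn F Ω ∧ ∀ φ : testSub Ω, l φ = ∫ x in Ω, φ.1 x * F x := by
  let μ : Measure (EN N) := (volume.restrict Ω).withDensity fun x => (g x : ℝ≥0∞)
  have hfin : IsFiniteMeasure μ := by
    refine isFiniteMeasure_withDensity ?_
    have := hgi.2
    rw [hasFiniteIntegral_iff_enorm] at this
    refine ne_of_lt (lt_of_le_of_lt (le_of_eq ?_) this)
    refine lintegral_congr fun x => ?_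
    simp
  have hmem : ∀ φ : testSub Ω, MemLp φ.1 2 μ := fun φ =>
    φ.2.1.continuous.memLp_of_hasCompactSupport φ.2.2.1
  let J : testSub Ω →ₗ[ℝ] Lp ℝ 2 μ :=
    { toFun := fun φ => (hmem φ).toLp
      map_add' := fun φ ψ => MemLp.toLp_add (hmem φ) (hmem ψ)
      map_smul' := fun c φ => MemLp.toLp_const_smul c (hmem φ) }
  obtain ⟨h, hh⟩ := aux_hilbert J l
    (c * (μ univ ^ (1 / (1 : ℝ≥0∞).toReal - 1 / (2 : ℝ≥0∞).toReal)).toReal) (by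
    intro φ
    refine (hl φ).trans ?_
    rw [mul_assoc]
    gcongr
    have e1 : ∫ x in Ω, |φ.1 x| * g x = (eLpNorm φ.1 1 μ).toReal := by
      rw [eLpNorm_one_eq_lintegral_enorm, ← integral_norm_eq_lintegral_enorm (hmem φ).1,
        integral_withDensity_eq_integral_smul hg]
      refine integral_congr_ae (Eventually.of_forall fun x => ?_)
      simp [NNReal.smul_def, mul_comm]
    have e2 : ‖J φ‖ = (eLpNorm φ.1 2 μ).toReal := Lp.norm_toLp φ.1 (hmem φ)
    rw [e1, e2, mul_comm, ← ENNReal.toReal_mul]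
    refine ENNReal.toReal_mono ?_ ?_
    · refine ENNReal.mul_ne_top (hmem φ).2.ne ?_
      exact ENNReal.rpow_ne_top_of_nonneg (by norm_num) (measure_ne_top _ _)
    · exact eLpNorm_le_eLpNorm_mul_rpow_measure_univ one_le_two (hmem φ).1)
  refine ⟨fun x => g x • h x, ?_, fun φ => ?_⟩
  · have h1 : Integrable h μ := (Lp.memLp h).integrable one_le_two
    exact (integrable_withDensity_iff_integrable_smul hg).1 h1
  · rw [hh, L2.inner_def]
    have : ∫ x, ⟪h x, (J φ) x⟫ ∂μ = ∫ x, h x * φ.1 x ∂μ := by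
      refine integral_congr_ae ?_
      filter_upwards [(hmem φ).coeFn_toLp] with x hx
      have : (J φ) x = φ.1 x := hx
      rw [this]; simp [mul_comm]
    rw [this, integral_withDensity_eq_integral_smul hg]
    refine integral_congr_ae (Eventually.of_forall fun x => ?_)
    simp only [NNReal.smul_def, smul_eq_mul]
    ring

/-- Pointwise bound from a tested bound. -/
lemma aux_pointwise {N d : ℕ} {Ω : Set (EN N)} (hΩ : IsOpen Ω) {F : EN N → EN d} {g : EN N → ℝ}
    (hF : IntegrableOn F Ω) (hg : IntegrableOn g Ω)
    (h : ∀ φ : EN N → ℝ, ContDiff ℝ (⊤ : ℕ∞) φ → HasCompactSupport φ → tsupport φ ⊆ Ω →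
      ‖∫ x in Ω, φ x • F x‖ ≤ ∫ x in Ω, |φ x| * g x) :
    ∀ᵐ x ∂(volume.restrict Ω), ‖F x‖ ≤ g x := by
  let φ : ℕ → ContDiffBump (0 : EN N) := fun n =>
    ⟨1 / ((n : ℝ) + 1), 2 * (1 / ((n : ℝ) + 1)), by positivity, by
      have : 0 < 1 / ((n : ℝ) + 1) := by positivity
      linarith⟩
  have hφ : Tendsto (fun n => (φ n).rOut) atTop (𝓝 0) := by
    have := (tendsto_one_div_add_atTop_nhds_zero_nat (𝕜 := ℝ)).const_mul 2
    rw [mul_zero] at this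
    exact this
  have hφ' : ∀ᶠ n in atTop, (φ n).rOut ≤ 2 * (φ n).rIn := Eventually.of_forall fun n => le_rfl
  have hF' : Integrable (Ω.indicator F) := (integrable_indicator_iff hΩ.measurableSet).2 hF
  have hg' : Integrable (Ω.indicator g) := (integrable_indicator_iff hΩ.measurableSet).2 hg
  rw [ae_restrict_iff' hΩ.measurableSet]
  filter_upwards [ContDiffBump.ae_convolution_tendsto_right_of_locallyIntegrable hφ hφ'
      hF'.locallyIntegrable,
    ContDiffBump.ae_convolution_tendsto_right_of_locallyIntegrable hφ hφ'
      hg'.locallyIntegrable] with x h1 h2 hx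
  rw [indicator_of_mem hx] at h1 h2
  refine le_of_tendsto_of_tendsto h1.norm h2 ?_
  obtain ⟨ε, hε, hball⟩ := Metric.isOpen_iff.1 hΩ x hx
  filter_upwards [hφ.eventually (gt_mem_nhds hε)] with n hn
  rw [convolution_eq_swap, convolution_eq_swap]
  simp only [ContinuousLinearMap.lsmul_apply]
  have hsm : ContDiff ℝ (⊤ : ℕ∞) fun t => (φ n).normed volume (x - t) :=
    (φ n).contDiff_normed.comp (contDiff_const.sub contDiff_id)
  have hsupp : HasCompactSupport fun t => (φ n).normed volume (x - t) :=
    (φ n).hasCompactSupport_normed.comp_homeomorph (Homeomorph.subLeft x)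
  have hts : tsupport (fun t => (φ n).normed volume (x - t)) ⊆ Ω := by
    intro t ht
    have := tsupport_comp_subset_preimage ((φ n).normed volume) (f := fun t : EN N => x - t)
      (by fun_prop) ht
    rw [mem_preimage, ContDiffBump.tsupport_normed_eq, Metric.mem_closedBall, dist_zero_right,
      norm_sub_rev] at this
    apply hball
    rw [Metric.mem_ball, dist_eq_norm]
    exact this.trans_lt hn
  have key := h _ hsm hsupp hts
  have e1 : ∫ t, (φ n).normed volume (x - t) • Ω.indicator F t =
      ∫ t in Ω, (φ n).normed volume (x - t) • F t := by
    rw [← integral_indicator hΩ.measurableSet]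
    congr 1; ext1 t
    by_cases ht : t ∈ Ω <;> simp [ht]
  have e2 : ∫ t, (φ n).normed volume (x - t) • Ω.indicator g t =
      ∫ t in Ω, |(φ n).normed volume (x - t)| * g t := by
    rw [← integral_indicator hΩ.measurableSet]
    congr 1; ext1 t
    by_cases ht : t ∈ Ω <;> simp [ht, abs_of_nonneg ((φ n).nonneg_normed (x - t))]
  rw [e1, e2]
  exact key


/-- A tested bound gives a weak gradient. -/
lemma aux_weak {N d : ℕ} {Ω : Set (EN N)} (hΩ : IsOpen Ω) {w : EN N → EN d} {g : EN N → ℝ≥0}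
    (hw : IntegrableOn w Ω) (hg : Measurable g) (hgi : IntegrableOn (fun x => (g x : ℝ)) Ω)
    (h : ∀ φ : EN N → ℝ, ContDiff ℝ (⊤ : ℕ∞) φ → HasCompactSupport φ → tsupport φ ⊆ Ω →
      ∀ e, ‖∫ x in Ω, fderiv ℝ φ x e • w x‖ ≤ ‖e‖ * ∫ x in Ω, |φ x| * g x) :
    ∃ Dw : EN N → Mat d N, MemW11 Ω w Dw ∧
      ∀ᵐ x ∂(volume.restrict Ω), ‖Dw x‖ ≤ g x := by
  have hIntg : ∀ φ : testSub Ω, ∀ e, IntegrableOn (fun x => fderiv ℝ φ.1 x e • w x) Ω := by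
    intro φ e
    have hc : Continuous fun x => fderiv ℝ φ.1 x e :=
      (φ.2.1.continuous_fderiv (by simp)).clm_apply continuous_const
    have hs : HasCompactSupport fun x => fderiv ℝ φ.1 x e := φ.2.2.1.fderiv_apply (𝕜 := ℝ) e
    obtain ⟨B, hB⟩ := hc.bounded_above_of_compact_support hs
    exact Integrable.bdd_smul hw B hc.aestronglyMeasurable (Eventually.of_forall hB)
  have hdiff : ∀ φ : testSub Ω, ∀ x, DifferentiableAt ℝ φ.1 x := fun φ x =>
    (φ.2.1.differentiable (by simp)) x
  let L : EN N → testSub Ω →ₗ[ℝ] EN d := fun e =>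
    { toFun := fun φ => ∫ x in Ω, fderiv ℝ φ.1 x e • w x
      map_add' := fun φ ψ => by
        rw [← integral_add (hIntg φ e) (hIntg ψ e)]
        congr 1; ext1 x
        have : fderiv ℝ (φ + ψ).1 x = fderiv ℝ φ.1 x + fderiv ℝ ψ.1 x :=
          fderiv_add (hdiff φ x) (hdiff ψ x)
        rw [this, add_apply, add_smul]
      map_smul' := fun c φ => by
        rw [RingHom.id_apply, ← integral_smul]
        congr 1; ext1 x
        have : fderiv ℝ (c • φ).1 x = c • fderiv ℝ φ.1 x :=
          fderiv_const_smul (hdiff φ x) c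
        rw [this, smul_apply, smul_assoc] }
  have hL : ∀ (e : EN N) (j : Fin d), ∃ F : EN N → ℝ, IntegrableOn F Ω ∧
      ∀ φ : testSub Ω, L e φ j = ∫ x in Ω, φ.1 x * F x := by
    intro e j
    refine aux_riesz hg hgi ((EuclideanSpace.proj j : EN d →L[ℝ] ℝ).toLinearMap ∘ₗ L e) ‖e‖
      (norm_nonneg _) fun φ => ?_
    refine le_trans ?_ (h φ.1 φ.2.1 φ.2.2.1 φ.2.2.2 e)
    exact PiLp.norm_apply_le (L e φ) j
  choose F hF1 hF2 using hL
  let b : Fin N → EN N := fun i => EuclideanSpace.single i 1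
  let Fv : Fin N → EN N → EN d := fun i x => ∑ j, F (b i) j x • EuclideanSpace.single j (1 : ℝ)
  have hFv : ∀ i, IntegrableOn (Fv i) Ω := fun i =>
    integrable_finsetSum _ fun j _ => (hF1 (b i) j).smul_const _
  have hFvj : ∀ i x j, Fv i x j = F (b i) j x := fun i x j => by
    simp [Fv, Pi.single_apply]
  have hφF : ∀ (φ : testSub Ω) (G : EN N → EN d), IntegrableOn G Ω →
      IntegrableOn (fun x => φ.1 x • G x) Ω := by
    intro φ G hG
    obtain ⟨B, hB⟩ := φ.2.1.continuous.bounded_above_of_compact_support φ.2.2.1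
    exact Integrable.bdd_smul hG B φ.2.1.continuous.aestronglyMeasurable
      (Eventually.of_forall hB)
  have hLF : ∀ i φ, L (b i) φ = ∫ x in Ω, φ.1 x • Fv i x := by
    intro i φ
    ext j
    rw [hF2]
    have := ContinuousLinearMap.integral_comp_comm (EuclideanSpace.proj j : EN d →L[ℝ] ℝ)
      (hφF φ _ (hFv i))
    refine Eq.trans ?_ this
    congr 1; ext1 x
    simp [hFvj]
  let Dw : EN N → Mat d N := fun x =>
    -∑ i, (EuclideanSpace.proj i : EN N →L[ℝ] ℝ).smulRight (Fv i x)
  have hDw : ∀ x y, Dw x y = -∑ i, y i • Fv i x := fun x y => by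
    simp [Dw]
  have hDwi : IntegrableOn Dw Ω := by
    refine Integrable.neg (integrable_finsetSum _ fun i _ => ?_)
    exact ((ContinuousLinearMap.smulRightL ℝ (EN N) (EN d))
      (EuclideanSpace.proj i : EN N →L[ℝ] ℝ)).integrable_comp (hFv i)
  have hweak : ∀ (φ : testSub Ω) y, ∫ x in Ω, fderiv ℝ φ.1 x y • w x
      = - ∫ x in Ω, φ.1 x • Dw x y := by
    intro φ y
    have hy : y = ∑ i, y i • b i := by
      ext j
      simp [b, Pi.single_apply]
    have e1 : ∫ x in Ω, fderiv ℝ φ.1 x y • w x = ∑ i, y i • L (b i) φ := by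
      simp only [L, LinearMap.coe_mk, AddHom.coe_mk]
      simp_rw [← integral_smul]
      rw [← integral_finsetSum]
      · congr 1; ext1 x
        conv_lhs => rw [hy, map_sum, Finset.sum_smul]
        refine Finset.sum_congr rfl fun i _ => ?_
        rw [map_smul, smul_assoc]
      · intro i _
        exact (hIntg φ (b i)).smul (y i)
    rw [e1, ← integral_neg]
    simp_rw [hLF, ← integral_smul]
    rw [← integral_finsetSum]
    · congr 1; ext1 x
      rw [hDw, smul_neg, neg_neg, Finset.smul_sum]
      refine Finset.sum_congr rfl fun i _ => ?_
      rw [smul_comm]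
    · intro i _
      exact (hφF φ _ (hFv i)).smul (y i)
  refine ⟨Dw, ⟨hw, hDwi, fun φ h1 h2 h3 y => hweak ⟨φ, h1, h2, h3⟩ y⟩, ?_⟩
  have hpt : ∀ n : ℕ, ∀ᵐ x ∂(volume.restrict Ω),
      ‖Dw x (TopologicalSpace.denseSeq (EN N) n)‖ ≤
        ‖TopologicalSpace.denseSeq (EN N) n‖ * g x := by
    intro n
    set e := TopologicalSpace.denseSeq (EN N) n
    refine aux_pointwise hΩ (hDwi.apply_continuousLinearMap e) (hgi.const_mul ‖e‖) ?_
    intro φ h1 h2 h3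
    have e1 := h φ h1 h2 h3 e
    have e2 := hweak ⟨φ, h1, h2, h3⟩ e
    simp only at e2
    rw [e2, norm_neg] at e1
    refine e1.trans (le_of_eq ?_)
    rw [← integral_const_mul]
    congr 1; ext1 x
    ring
  rw [← ae_all_iff] at hpt
  filter_upwards [hpt] with x hx
  refine ContinuousLinearMap.opNorm_le_bound _ (g x).2 fun y => ?_
  have hcl : IsClosed {y : EN N | ‖Dw x y‖ ≤ ‖y‖ * g x} :=
    isClosed_le (by fun_prop) (by fun_prop)
  have : y ∈ {y : EN N | ‖Dw x y‖ ≤ ‖y‖ * g x} := by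
    have hd := TopologicalSpace.denseRange_denseSeq (EN N)
    exact hcl.closure_subset_iff.2 (range_subset_iff.2 hx) (hd y)
  rw [mul_comm]
  exact this


lemma aux_cut {d : ℕ} {S : EN d → ℝ} {Φ : EN d → EN d} {C Δ ε : ℝ} (hC : 0 ≤ C)
    (hε : 0 < ε) (hS : ∀ y, 0 ≤ S y) (hSl : ∀ y z, |S y - S z| ≤ ‖y - z‖)
    (hΔ : ∀ y, ‖Φ y‖ ≤ Δ) (hΦ : ∀ y z, 0 < S y → ‖Φ y - Φ z‖ ≤ C / S y * ‖y - z‖) (y z : EN d) :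
    ‖(S y / max (S y) ε) • Φ y - (S z / max (S z) ε) • Φ z‖
      ≤ (C + Δ) / max (S y) ε * ‖y - z‖ := by
  have hm : ∀ y, 0 < max (S y) ε := fun y => lt_max_of_lt_right hε
  have hΔ0 : 0 ≤ Δ := (norm_nonneg _).trans (hΔ y)
  have e : (S y / max (S y) ε) • Φ y - (S z / max (S z) ε) • Φ z =
      (S y / max (S y) ε) • (Φ y - Φ z) + (S y / max (S y) ε - S z / max (S z) ε) • Φ z := by
    module
  have t1 : ‖(S y / max (S y) ε) • (Φ y - Φ z)‖ ≤ C / max (S y) ε * ‖y - z‖ := by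
    rw [norm_smul, Real.norm_of_nonneg (div_nonneg (hS y) (hm y).le)]
    rcases (hS y).eq_or_lt with h0 | h0
    · rw [← h0, zero_div, zero_mul]
      have := hm y
      rw [← h0] at this
      positivity
    · calc S y / max (S y) ε * ‖Φ y - Φ z‖ ≤ S y / max (S y) ε * (C / S y * ‖y - z‖) := by
            gcongr
            exact hΦ y z h0
        _ = C / max (S y) ε * ‖y - z‖ := by
            have := (hm y).ne'
            field_simp
  have t0 : |S y / max (S y) ε - S z / max (S z) ε| ≤ ‖y - z‖ / max (S y) ε := by
    have h1 := abs_le.1 (hSl y z)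
    have hz := hS z
    have hy := hS y
    rcases le_total (S y) ε with hye | hye
    · rw [max_eq_right hye]
      rcases le_total (S z) ε with hze | hze
      · rw [max_eq_right hze, ← sub_div, abs_div, abs_of_pos hε]
        gcongr
        exact hSl y z
      · have : 0 < S z := hε.trans_le hze
        rw [max_eq_left hze, div_self this.ne', ← div_self hε.ne', ← sub_div, abs_div,
          abs_of_pos hε]
        gcongr
        rw [abs_le]
        constructor <;> linarith
    · have hy0 : 0 < S y := hε.trans_le hye
      rw [max_eq_left hye, div_self hy0.ne']
      rcases le_total (S z) ε with hze | hze
      · rw [max_eq_right hze]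
        have h2 : S z / S y ≤ S z / ε := by gcongr
        have h3 : S z / ε ≤ 1 := (div_le_one hε).2 hze
        rw [abs_of_nonneg (by linarith)]
        have h4 : 1 - S z / S y = (S y - S z) / S y := by field_simp
        have h5 : (S y - S z) / S y ≤ ‖y - z‖ / S y := by
          gcongr
          linarith
        linarith
      · have : 0 < S z := hε.trans_le hze
        rw [max_eq_left hze, div_self this.ne', sub_self, abs_zero]
        positivity
  rw [e]
  refine (norm_add_le _ _).trans ?_
  rw [norm_smul (S y / max (S y) ε - S z / max (S z) ε), Real.norm_eq_abs]
  have t2 : |S y / max (S y) ε - S z / max (S z) ε| * ‖Φ z‖ ≤ ‖y - z‖ / max (S y) ε * Δ := by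
    have := hm y
    gcongr
    exact hΔ z
  calc _ ≤ C / max (S y) ε * ‖y - z‖ + ‖y - z‖ / max (S y) ε * Δ := add_le_add t1 t2
    _ = _ := by ring

lemma aux_main {N d : ℕ} {Ω : Set (EN N)} (hΩ : IsOpen Ω) (hΩf : volume Ω ≠ ⊤)
    {v : EN N → EN d} {Dv : EN N → Mat d N} (hv : MemW11 Ω v Dv)
    {S : EN d → ℝ} {Φ : EN d → EN d} {C Δ : ℝ} (hC : 0 ≤ C) (hSc : Continuous S)
    (hS : ∀ y, 0 ≤ S y) (hSl : ∀ y z, |S y - S z| ≤ ‖y - z‖)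
    (hΔ : ∀ y, ‖Φ y‖ ≤ Δ) (hΦ : ∀ y z, 0 < S y → ‖Φ y - Φ z‖ ≤ C / S y * ‖y - z‖)
    (hpos : ∀ᵐ x ∂(volume.restrict Ω), 0 < S (v x)) {A : ℝ≥0∞} (hA : A ≠ ⊤)
    (hIntg : ∫⁻ x in Ω, ‖Dv x‖ₑ * (ENNReal.ofReal (S (v x)))⁻¹ ≤ A * ∫⁻ x in Ω, ‖Dv x‖ₑ) :
    ∃ Dw, MemW11 Ω (fun x => Φ (v x)) Dw ∧
      ∫ x in Ω, ‖Dw x‖ ≤ (C + Δ) * A.toReal * ∫ x in Ω, ‖Dv x‖ := by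
  have hΔ0 : 0 ≤ Δ := (norm_nonneg _).trans (hΔ 0)
  have hK : 0 ≤ C + Δ := by positivity
  obtain ⟨hv1, hv2, hv3⟩ := hv
  have hΩm := hΩ.measurableSet
  have hfin : IsFiniteMeasure (volume.restrict Ω) := ⟨by simpa using hΩf.lt_top⟩
  obtain ⟨v', hv'm, hv'⟩ := hv1.1
  obtain ⟨D', hD'm, hD'⟩ := hv2.1
  set u : EN N → EN d := Ω.indicator v' with hu
  set D : EN N → Mat d N := Ω.indicator D' with hD
  have hum : Measurable u := hv'm.measurable.indicator hΩm
  have hDm : StronglyMeasurable D := hD'm.indicator hΩm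
  have hae : ∀ᵐ x ∂(volume.restrict Ω), u x = v x ∧ D x = Dv x := by
    filter_upwards [hv', hD', ae_restrict_mem hΩm] with x h1 h2 hx
    rw [hu, hD, indicator_of_mem hx, indicator_of_mem hx]
    exact ⟨h1.symm, h2.symm⟩
  have hui : Integrable u := (integrable_indicator_iff hΩm).2 (Integrable.congr hv1 hv')
  have hDi : Integrable D := 
    (integrable_indicator_iff hΩm).2 (IntegrableOn.congr_fun_ae hv2 hD')
  have hw : ∀ φ : EN N → ℝ, ContDiff ℝ (⊤ : ℕ∞) φ → HasCompactSupport φ → tsupport φ ⊆ Ω →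
      ∀ y, ∫ x, fderiv ℝ φ x y • u x = - ∫ x, φ x • D x y := by
    intro φ h1 h2 h3 y
    have := hv3 φ h1 h2 h3 y
    rw [← setIntegral_eq_integral_of_forall_compl_eq_zero (s := Ω) (f := fun x =>
        fderiv ℝ φ x y • u x) (fun x hx => by simp [hu, indicator_of_notMem hx]),
      ← setIntegral_eq_integral_of_forall_compl_eq_zero (s := Ω) (f := fun x =>
        φ x • D x y) (fun x hx => by simp [hD, indicator_of_notMem hx])]
    have e1 : ∫ x in Ω, fderiv ℝ φ x y • u x = ∫ x in Ω, fderiv ℝ φ x y • v x := by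
      refine integral_congr_ae ?_
      filter_upwards [hae] with x hx
      rw [hx.1]
    have e2 : ∫ x in Ω, φ x • D x y = ∫ x in Ω, φ x • Dv x y := by
      refine integral_congr_ae ?_
      filter_upwards [hae] with x hx
      rw [hx.2]
    rw [e1, e2, this]
  -- the majorant
  let g : EN N → ℝ≥0 := fun x => Real.toNNReal ((C + Δ) * ‖D x‖ / S (u x))
  have hgm : Measurable g :=
    (((measurable_const.mul hDm.norm.measurable).div (hSc.measurable.comp hum))).real_toNNReal
  have hgv : ∀ x, (g x : ℝ) = (C + Δ) * ‖D x‖ / S (u x) := fun x =>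
    Real.coe_toNNReal _ (div_nonneg (mul_nonneg hK (norm_nonneg _)) (hS _))
  have hgl : ∫⁻ x in Ω, ENNReal.ofReal (g x) ≤
      ENNReal.ofReal (C + Δ) * (A * ∫⁻ x in Ω, ‖Dv x‖ₑ) := by
    refine le_trans ?_ (mul_le_mul_right hIntg _)
    rw [← lintegral_const_mul' _ _ ENNReal.ofReal_ne_top]
    refine lintegral_mono_ae ?_
    filter_upwards [hae, hpos] with x hx hp
    rw [hgv, hx.1, hx.2, ENNReal.ofReal_div_of_pos hp, ENNReal.ofReal_mul hK, ofReal_norm,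
      ENNReal.div_eq_inv_mul, mul_comm, mul_assoc]
  have hDvt : ∫⁻ x in Ω, ‖Dv x‖ₑ ≠ ⊤ := hv2.2.ne
  have htop : ENNReal.ofReal (C + Δ) * (A * ∫⁻ x in Ω, ‖Dv x‖ₑ) ≠ ⊤ :=
    ENNReal.mul_ne_top ENNReal.ofReal_ne_top (ENNReal.mul_ne_top hA hDvt)
  have hgi : IntegrableOn (fun x => (g x : ℝ)) Ω := by
    refine ⟨(measurable_coe_nnreal_real.comp hgm).aestronglyMeasurable, ?_⟩
    rw [hasFiniteIntegral_iff_ofReal (Eventually.of_forall fun x => (g x).coe_nonneg)]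
    exact hgl.trans_lt htop.lt_top
  have hgint : ∫ x in Ω, (g x : ℝ) ≤ (C + Δ) * A.toReal * ∫ x in Ω, ‖Dv x‖ := by
    rw [integral_eq_lintegral_of_nonneg_ae (Eventually.of_forall fun x => (g x).coe_nonneg) hgi.1,
      integral_norm_eq_lintegral_enorm hv2.1]
    refine (ENNReal.toReal_mono htop hgl).trans (le_of_eq ?_)
    rw [ENNReal.toReal_mul, ENNReal.toReal_mul, ENNReal.toReal_ofReal hK, mul_assoc]
  -- approximations
  let ε : ℕ → ℝ := fun n => 1 / ((n : ℝ) + 1)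
  have hε : ∀ n, 0 < ε n := fun n => by positivity
  let Ψ : ℕ → EN d → EN d := fun n y => (S y / max (S y) (ε n)) • Φ y
  let G : ℕ → EN d → ℝ := fun n y => (C + Δ) / max (S y) (ε n)
  have hm : ∀ n y, 0 < max (S y) (ε n) := fun n y => lt_max_of_lt_right (hε n)
  have hGb : ∀ n y, G n y ≤ (C + Δ) / ε n := fun n y =>
    div_le_div_of_nonneg_left hK (hε n) (le_max_right _ _)
  have hGc : ∀ n, Continuous (G n) := fun n =>
    continuous_const.div (hSc.max continuous_const) fun y => (hm n y).ne'
  have hlip : ∀ n y z, ‖Ψ n y - Ψ n z‖ ≤ G n y * ‖y - z‖ := fun n y z =>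
    aux_cut hC (hε n) hS hSl hΔ hΦ y z
  have hΨc : ∀ n, Continuous (Ψ n) := fun n => by
    have : LipschitzWith (Real.toNNReal ((C + Δ) / ε n)) (Ψ n) := by
      refine LipschitzWith.of_dist_le_mul fun y z => ?_
      rw [dist_eq_norm, dist_eq_norm, Real.coe_toNNReal _ (div_nonneg hK (hε n).le)]
      exact (hlip n y z).trans (mul_le_mul_of_nonneg_right (hGb n y) (norm_nonneg _))
    exact this.continuous
  have hΨb : ∀ n y, ‖Ψ n y‖ ≤ Δ := fun n y => by
    have h1 : 0 ≤ S y / max (S y) (ε n) := div_nonneg (hS y) (hm n y).le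
    have h2 : S y / max (S y) (ε n) ≤ 1 := (div_le_one (hm n y)).2 (le_max_left _ _)
    rw [norm_smul, Real.norm_of_nonneg h1]
    calc _ ≤ 1 * Δ := mul_le_mul h2 (hΔ y) (norm_nonneg _) zero_le_one
      _ = Δ := one_mul _
  have hlim : ∀ᵐ x ∂(volume.restrict Ω), Tendsto (fun n => Ψ n (u x)) atTop (𝓝 (Φ (v x))) := by
    filter_upwards [hae, hpos] with x hx hp
    rw [hx.1]
    refine tendsto_const_nhds.congr' ?_
    have : Tendsto ε atTop (𝓝 0) := tendsto_one_div_add_atTop_nhds_zero_nat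
    filter_upwards [this.eventually (gt_mem_nhds hp)] with n hn
    simp only [Ψ]
    rw [max_eq_left hn.le, div_self hp.ne', one_smul]
  have hwm : AEStronglyMeasurable (fun x => Φ (v x)) (volume.restrict Ω) :=
    aestronglyMeasurable_of_tendsto_ae atTop
      (fun n => ((hΨc n).measurable.comp hum).aestronglyMeasurable) hlim
  have hwi : IntegrableOn (fun x => Φ (v x)) Ω :=
    Integrable.of_bound hwm Δ (Eventually.of_forall fun x => hΔ _)
  obtain ⟨Dw, hDw, hDwg⟩ := aux_weak hΩ hwi hgm hgi (by
    intro φ h1 h2 h3 e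
    have hc : Continuous fun x => fderiv ℝ φ x e :=
      (h1.continuous_fderiv (by simp)).clm_apply continuous_const
    have hs : HasCompactSupport fun x => fderiv ℝ φ x e := h2.fderiv_apply (𝕜 := ℝ) e
    have hdom : Tendsto (fun n => ∫ x in Ω, fderiv ℝ φ x e • Ψ n (u x)) atTop
        (𝓝 (∫ x in Ω, fderiv ℝ φ x e • Φ (v x))) := by
      refine tendsto_integral_of_dominated_convergence (fun x => ‖fderiv ℝ φ x e‖ * Δ) ?_ ?_ ?_ ?_
      · intro n
        exact hc.aestronglyMeasurable.smul
          ((hΨc n).measurable.comp hum).aestronglyMeasurable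
      · exact ((hc.integrable_of_hasCompactSupport hs).norm.mul_const Δ).integrableOn
      · intro n
        refine Eventually.of_forall fun x => ?_
        rw [norm_smul]
        exact mul_le_mul_of_nonneg_left (hΨb n _) (norm_nonneg _)
      · filter_upwards [hlim] with x hx
        exact hx.const_smul _
    refine le_of_tendsto hdom.norm (Eventually.of_forall fun n => ?_)
    obtain ⟨B, hB⟩ := h1.continuous.bounded_above_of_compact_support h2
    have hφg : IntegrableOn (fun x => |φ x| * g x) Ω :=
      Integrable.bdd_mul hgi (c := B) h1.continuous.abs.aestronglyMeasurable
        (Eventually.of_forall fun x => by simpa using hB x)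
    have hnn : 0 ≤ ∫ x in Ω, |φ x| * g x :=
      integral_nonneg fun x => mul_nonneg (abs_nonneg _) (g x).coe_nonneg
    have key := aux_chain hΩ hΩf hui hum hDi hDm hw (hΨc n) (hΨb n) (hGc n) (hGb n) (hlip n)
      h1 h2 h3 e
    have hle : ∫⁻ x, ‖φ x‖ₑ * ENNReal.ofReal (G n (u x)) * ‖D x e‖ₑ ≤
        ENNReal.ofReal (‖e‖ * ∫ x in Ω, |φ x| * g x) := by
      rw [ENNReal.ofReal_mul (norm_nonneg _), ofReal_integral_eq_lintegral_ofReal hφg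
        (Eventually.of_forall fun x => mul_nonneg (abs_nonneg _) (g x).coe_nonneg),
        ← lintegral_const_mul' _ _ ENNReal.ofReal_ne_top]
      have hset : ∫⁻ x, ‖φ x‖ₑ * ENNReal.ofReal (G n (u x)) * ‖D x e‖ₑ =
          ∫⁻ x in Ω, ‖φ x‖ₑ * ENNReal.ofReal (G n (u x)) * ‖D x e‖ₑ := by
        rw [← lintegral_indicator hΩm]
        congr 1; ext1 x
        by_cases hx : x ∈ Ω
        · rw [indicator_of_mem hx]
        · rw [indicator_of_notMem hx, hD, indicator_of_notMem hx]
          simp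
      rw [hset]
      · refine lintegral_mono_ae ?_
        filter_upwards [hae, hpos] with x hx hp
        rw [← hx.1] at hp
        rw [← ofReal_norm, ← ofReal_norm (D x e), ← ENNReal.ofReal_mul (norm_nonneg _),
          ← ENNReal.ofReal_mul (mul_nonneg (norm_nonneg _) (div_nonneg hK (hm n _).le)),
          ← ENNReal.ofReal_mul (norm_nonneg _), hgv, Real.norm_eq_abs]
        refine ENNReal.ofReal_le_ofReal ?_
        have a1 : G n (u x) ≤ (C + Δ) / S (u x) :=
          div_le_div_of_nonneg_left hK hp (le_max_left _ _)
        have a2 : ‖D x e‖ ≤ ‖D x‖ * ‖e‖ := (D x).le_opNorm e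
        calc |φ x| * G n (u x) * ‖D x e‖ ≤ |φ x| * ((C + Δ) / S (u x)) * (‖D x‖ * ‖e‖) := by
              gcongr
          _ = ‖e‖ * (|φ x| * ((C + Δ) * ‖D x‖ / S (u x))) := by ring
    have := key.trans hle
    rw [← ofReal_norm] at this
    exact (ENNReal.ofReal_le_ofReal_iff (mul_nonneg (norm_nonneg _) hnn)).1 this)
  refine ⟨Dw, hDw, le_trans ?_ hgint⟩
  exact integral_mono_ae hDw.2.1.norm hgi hDwg

lemma aux_cont_of_lip {d : ℕ} {S : EN d → ℝ} (h : ∀ y z, |S y - S z| ≤ ‖y - z‖) :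
    Continuous S := by
  have : LipschitzWith 1 S := LipschitzWith.of_dist_le_mul fun y z => by
    rw [Real.dist_eq, dist_eq_norm, NNReal.coe_one, one_mul]
    exact h y z
  exact this.continuous

/-- Projection onto the manifold: every
`v ∈ W^{1,1}(Ω;ℝ^d) ∩ C^∞(Ω∖Σ;ℝ^d)` with values a.e. in `co(M)` can be
projected to some `w ∈ W^{1,1}(Ω;M)` agreeing with `v` where `v ∈ M`, with a
gradient estimate whose constant depends only on `d` and `M`. -/
theorem statement_3
    (d m : ℕ) (M : Set (EN d)) (hMne : M.Nonempty) (hMcpt : IsCompact M)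
    (hMconn : IsConnected M) (hMsub : IsSubmanifoldDim d m M) :
    ∃ Cs : ℝ, 0 < Cs ∧
      ∀ (N : ℕ) (Ω : Set (EN N)), IsOpen Ω → Bornology.IsBounded Ω →
      ∀ Sg : Set (EN N), IsSigmaSet N Sg →
      ∀ (v : EN N → EN d) (Dv : EN N → Mat d N),
        MemW11 Ω v Dv → ContDiffOn ℝ (⊤ : ℕ∞) v (Ω \ Sg) →
        (∀ᵐ x ∂(volume.restrict Ω), v x ∈ convexHull ℝ M) →
        ∃ (w : EN N → EN d) (Dw : EN N → Mat d N),
          MemW11 Ω w Dw ∧ AeIn Ω w M ∧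
          (∀ᵐ x ∂(volume.restrict {x ∈ Ω \ Sg | v x ∈ M}), w x = v x) ∧
          ∫ x in Ω, ‖Dw x‖ ≤ Cs * ∫ x in Ω, ‖Dv x‖ := by
  obtain ⟨ρ, n, p, C, hρ, hC, hproj⟩ := aux_proj hMne hMcpt hMconn hMsub
  obtain ⟨A, hA, hchoice⟩ := aux_choice M p hρ
  obtain ⟨Δ, hΔ⟩ := hMcpt.isBounded.exists_norm_le
  have hΔ0 : 0 ≤ Δ := by
    obtain ⟨y, hy⟩ := hMne
    exact (norm_nonneg y).trans (hΔ y hy)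
  have hK : 0 ≤ (C + Δ) * A.toReal := mul_nonneg (add_nonneg hC hΔ0) ENNReal.toReal_nonneg
  refine ⟨(C + Δ) * A.toReal + 1, by linarith, ?_⟩
  intro N Ω hΩ hΩb Sg _ v Dv hv _ _
  have hΩf : volume Ω ≠ ⊤ := hΩb.measure_lt_top.ne
  have hfin : IsFiniteMeasure (volume.restrict Ω) := ⟨by simpa using hΩf.lt_top⟩
  obtain ⟨s, hs, b, hb, hpos, hIntg⟩ := hchoice N (volume.restrict Ω) v (fun x => ‖Dv x‖ₑ)
    hv.1.1.aemeasurable hv.2.1.1.enorm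
  obtain ⟨Φ, hΦM, hΦid, hΦ⟩ := hproj s hs b hb
  have hSc : Continuous (Sfun M p ρ s b) :=
    aux_cont_of_lip (Sfun_lip M p ρ s b)
  obtain ⟨Dw, hDw, hle⟩ := aux_main hΩ hΩf hv hC hSc (Sfun_nonneg M p ρ s b)
    (Sfun_lip M p ρ s b) (fun y => hΔ _ (hΦM y)) hΦ hpos hA hIntg
  refine ⟨fun x => Φ (v x), Dw, hDw, Eventually.of_forall fun x => hΦM _, ?_, ?_⟩
  · have hz : ∀ x, v x ∈ M → Φ (v x) = v x := fun x hx => hΦid _ hx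
    have hsub : {x ∈ Ω \ Sg | v x ∈ M} ⊆ Ω := fun x hx => hx.1.1
    have m1 : AEStronglyMeasurable v (volume.restrict {x ∈ Ω \ Sg | v x ∈ M}) :=
      (hv.1.mono_set hsub).1
    have m2 : AEStronglyMeasurable (fun x => Φ (v x))
        (volume.restrict {x ∈ Ω \ Sg | v x ∈ M}) := (hDw.1.mono_set hsub).1
    rw [ae_restrict_iff₀ (nullMeasurableSet_eq_fun m2.aemeasurable m1.aemeasurable)]
    exact Eventually.of_forall fun x hx => hz x hx.2
  · have h0 : 0 ≤ ∫ x in Ω, ‖Dv x‖ := integral_nonneg fun x => norm_nonneg _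
    rw [add_mul, one_mul]
    exact hle.trans (le_add_of_nonneg_right h0)
end

section
/- (Properties of the modified integrand g) Define g(y,s,ξ) := f(y, ℙ_s(ξ)) + |ξ − ℙ_s(ξ)|, where ℙ_s(ξ) := χ(s)·(P_{Π(s)}(ξ_1),…,P_{Π(s)}(ξ_N)) for ξ = (ξ_1,…,ξ_N) ∈ ℝ^{d×N}. Then g is a Carathéodory function satisfying: g(y,s,ξ) = f(y,ξ) and g^∞(y,s,ξ) = f^∞(y,ξ) whenever s ∈ M and ξ ∈ [T_s M]^N; (i) g is 1-periodic in y; (ii) there exist 0 < α′ ≤ β′ with α′|ξ| ≤ g(y,s,ξ) ≤ β′(1+|ξ|) for all (s,ξ) and a.e. y; (iii) there exist C, C′ > 0 with |g(y,s,ξ) − g(y,s′,ξ)| ≤ C|s−s′||ξ| and |g(y,s,ξ) − g(y,s,ξ′)| ≤ C′|ξ−ξ′| for all s, s′ ∈ ℝ^d, ξ, ξ′ ∈ ℝ^{d×N} and a.e. y; (iv) if in addition (H4) holds for f, then there exist C″ > 0 and 0 < q < 1 with |g(y,s,ξ) − g^∞(y,s,ξ)| ≤ C″(1+|ξ|^{1−q})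 for all (s,ξ) and a.e. y, where g^∞(y,s,ξ) := limsup_{t→∞} g(y,s,tξ)/t. -/
open MeasureTheory Filter Set
open scoped ENNReal RealInnerProductSpace Topology NNReal

section Helpers

variable {N d : ℕ} {M : Set (EN d)}

/-- The operator `χ(s) P_{Π(s)}`. -/
def tanQ (D : ProjData M) (s : EN d) : EN d →L[ℝ] EN d := D.chi s • D.tanProj (D.pr s)

theorem zero_smul_clm (A : EN d →L[ℝ] EN d) : (0 : ℝ) • A = 0 := by
  ext v; simp

theorem smul_sub_mat (t : ℝ) (A B : Mat d N) : t • A - t • B = t • (A - B) := by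
  ext v; simp [mul_sub]

theorem tanP_eq_comp (D : ProjData M) (s : EN d) (ξ : Mat d N) :
    tanP D s ξ = (tanQ D s).comp ξ := by
  unfold tanP tanQ
  ext v
  simp

theorem tanProj_norm_le (D : ProjData M) {s : EN d} (hs : s ∈ M) : ‖D.tanProj s‖ ≤ 1 := by
  refine ContinuousLinearMap.opNorm_le_bound _ zero_le_one fun v => ?_
  have h1 : ⟪D.tanProj s v, D.tanProj s v⟫ = ⟪v, D.tanProj s v⟫ := by
    rw [D.tanProj_symm s hs, D.tanProj_id s hs _ (D.tanProj_mem s hs v)]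
  have h2 := real_inner_le_norm v (D.tanProj s v)
  rw [← h1, real_inner_self_eq_norm_sq] at h2
  rcases (norm_nonneg (D.tanProj s v)).eq_or_lt with h | h
  · rw [← h, one_mul]; exact norm_nonneg v
  · rw [one_mul]; nlinarith

theorem chi_zero_of (D : ProjData M) {s : EN d} (h : ¬ Metric.infDist s M < D.δ₀) :
    D.chi s = 0 := by
  have := D.δ₀_pos
  exact D.chi_zero s (by linarith)

theorem tanQ_norm_le (D : ProjData M) (s : EN d) : ‖tanQ D s‖ ≤ 1 := by
  unfold tanQ
  by_cases h : Metric.infDist s M < D.δ₀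
  · have h1 := tanProj_norm_le D (D.pr_mem s h)
    have h2 := D.chi_range s
    rw [norm_smul, Real.norm_eq_abs, abs_of_nonneg h2.1]
    exact mul_le_one₀ h2.2 (norm_nonneg _) h1
  · rw [chi_zero_of D h, zero_smul_clm, norm_zero]; exact zero_le_one

theorem tanP_norm_le (D : ProjData M) (s : EN d) (ξ : Mat d N) : ‖tanP D s ξ‖ ≤ ‖ξ‖ := by
  rw [tanP_eq_comp]
  refine (ContinuousLinearMap.opNorm_comp_le _ _).trans ?_
  exact mul_le_of_le_one_left (norm_nonneg _) (tanQ_norm_le D s)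

theorem tanP_sub_norm_le (D : ProjData M) (s : EN d) (ξ ξ' : Mat d N) :
    ‖tanP D s ξ - tanP D s ξ'‖ ≤ ‖ξ - ξ'‖ := by
  have : tanP D s ξ - tanP D s ξ' = tanP D s (ξ - ξ') := by
    simp only [tanP_eq_comp]; ext v; simp
  rw [this]; exact tanP_norm_le D s _

theorem tanQ_lip (D : ProjData M) : ∃ K : ℝ, 0 < K ∧ ∀ s s', ‖tanQ D s - tanQ D s'‖ ≤ K * ‖s - s'‖ := by
  obtain ⟨K₁, h₁⟩ := D.chi_smooth.lipschitzWith_of_hasCompactSupport D.chi_supp (by simp)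
  obtain ⟨K₂, h₂⟩ := D.tanProj_lip
  have hchi : ∀ s s', |D.chi s - D.chi s'| ≤ K₁ * ‖s - s'‖ := fun s s' => by
    have := h₁.dist_le_mul s s'
    rwa [Real.dist_eq, dist_eq_norm] at this
  have hK₁ : (0:ℝ) ≤ K₁ := K₁.2
  have hK₂ : (0:ℝ) ≤ K₂ := K₂.2
  -- the case where `s` is in the neighborhood and `s'` is not
  have key : ∀ s s', Metric.infDist s M < D.δ₀ → ¬ Metric.infDist s' M < D.δ₀ →
      ‖tanQ D s - tanQ D s'‖ ≤ K₁ * ‖s - s'‖ := by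
    intro s s' hs hs'
    have h0 := chi_zero_of D hs'
    have h3 := hchi s s'
    have h1 := tanProj_norm_le D (D.pr_mem s hs)
    unfold tanQ
    rw [h0] at h3 ⊢
    rw [zero_smul_clm, sub_zero, norm_smul, Real.norm_eq_abs]
    rw [sub_zero] at h3
    exact (mul_le_of_le_one_right (abs_nonneg _) h1).trans h3
  have le1 : ∀ s s' : EN d, K₁ * ‖s - s'‖ ≤ (K₁ + K₂ + 1) * ‖s - s'‖ := fun s s' =>
    mul_le_mul_of_nonneg_right (by linarith) (norm_nonneg _)
  refine ⟨K₁ + K₂ + 1, by positivity, fun s s' => ?_⟩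
  by_cases hs : Metric.infDist s M < D.δ₀ <;> by_cases hs' : Metric.infDist s' M < D.δ₀
  · have h3 := h₂.dist_le_mul s hs s' hs'
    simp only [dist_eq_norm] at h3
    have h1 := tanProj_norm_le D (D.pr_mem s hs)
    have hr := D.chi_range s'
    have e : tanQ D s - tanQ D s' = (D.chi s - D.chi s') • D.tanProj (D.pr s)
        + D.chi s' • (D.tanProj (D.pr s) - D.tanProj (D.pr s')) := by
      unfold tanQ; module
    rw [e]
    calc _ ≤ |D.chi s - D.chi s'| * ‖D.tanProj (D.pr s)‖
        + |D.chi s'| * ‖D.tanProj (D.pr s) - D.tanProj (D.pr s')‖ := by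
          refine (norm_add_le _ _).trans ?_
          rw [norm_smul, norm_smul, Real.norm_eq_abs, Real.norm_eq_abs]
      _ ≤ K₁ * ‖s - s'‖ + K₂ * ‖s - s'‖ := by
          refine add_le_add ((mul_le_of_le_one_right (abs_nonneg _) h1).trans (hchi s s')) ?_
          refine (mul_le_of_le_one_left (norm_nonneg _) ?_).trans h3
          rw [abs_of_nonneg hr.1]; exact hr.2
      _ ≤ _ := by nlinarith [norm_nonneg (s - s')]
  · exact (key s s' hs hs').trans (le1 s s')
  · rw [norm_sub_rev, norm_sub_rev s s']
    exact (key s' s hs' hs).trans (le1 s' s)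
  · unfold tanQ
    rw [chi_zero_of D hs, chi_zero_of D hs']
    rw [zero_smul_clm, zero_smul_clm, sub_zero, norm_zero]
    positivity

theorem tanP_of_tangent (D : ProjData M) {s : EN d} (hs : s ∈ M) {ξ : Mat d N}
    (hξ : TangentCols M s ξ) : tanP D s ξ = ξ := by
  have hδ := D.δ₀_pos
  have h0 : Metric.infDist s M = 0 := Metric.infDist_zero_of_mem hs
  have hc : D.chi s = 1 := D.chi_one s (by rw [h0]; positivity)
  have hp : D.pr s = s := by
    have := D.pr_nearest s (by rw [h0]; exact hδ)
    rw [h0, norm_eq_zero, sub_eq_zero] at this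
    exact this.symm
  unfold tanP
  rw [hc, hp, one_smul]
  have := (EuclideanSpace.basisFun (Fin N) ℝ).toBasis.ext (f₁ := ((D.tanProj s).comp ξ : Mat d N).toLinearMap)
    (f₂ := ξ.toLinearMap) (fun i => by
      simpa using D.tanProj_id s hs _ (hξ i))
  exact ContinuousLinearMap.coe_injective this

theorem tanP_smul (D : ProjData M) (s : EN d) (t : ℝ) (ξ : Mat d N) :
    tanP D s (t • ξ) = t • tanP D s ξ := by
  simp only [tanP_eq_comp]; ext v; simp

theorem recc_gOf (D : ProjData M) (f : EN N → Mat d N → ℝ) (y : EN N) (β : ℝ) (hβ : 0 ≤ β)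
    (h0 : ∀ ξ, 0 ≤ f y ξ) (hg : ∀ ξ, f y ξ ≤ β * (1 + ‖ξ‖)) (s : EN d) (ξ : Mat d N) :
    recc (gOf D f y s) ξ = recc (f y) (tanP D s ξ) + ‖ξ - tanP D s ξ‖ := by
  unfold recc
  rw [← limsup_add_const]
  · apply limsup_congr
    filter_upwards [eventually_gt_atTop (0:ℝ)] with t ht
    unfold gOf
    rw [tanP_smul, smul_sub_mat, norm_smul, Real.norm_eq_abs, abs_of_pos ht]
    field_simp
  · refine isBoundedUnder_of_eventually_le (a := β * (1 + ‖tanP D s ξ‖)) ?_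
    filter_upwards [eventually_ge_atTop (1:ℝ)] with t ht
    have ht0 : 0 < t := by linarith
    rw [div_le_iff₀ ht0]
    refine (hg _).trans ?_
    rw [norm_smul, Real.norm_eq_abs, abs_of_pos ht0, mul_assoc]
    refine mul_le_mul_of_nonneg_left ?_ hβ
    nlinarith
  · refine IsBoundedUnder.isCoboundedUnder_le (isBoundedUnder_of_eventually_ge (a := 0) ?_)
    filter_upwards [eventually_gt_atTop (0:ℝ)] with t ht
    exact div_nonneg (h0 _) ht.le

end Helpers

/-- Properties of the modified integrand `g`:
`g(y,s,ξ) = f(y,ℙ_s(ξ)) + |ξ - ℙ_s(ξ)|` is Carathéodory, agrees with `f`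
(together with its recession function) on tangential pairs, is periodic in
`y`, has linear growth and coercivity, is Lipschitz in `s` and `ξ`, and
satisfies the recession estimate under (H4). -/
theorem statement_4
    (N d : ℕ) (M : Set (EN d)) (hM : IsNiceManifold d M)
    (f : EN N → Mat d N → ℝ) (α β L : ℝ) (hf : StdIntegrand N d f α β L)
    (D : ProjData M) :
    ((∀ (s : EN d) (ξ : Mat d N), Measurable fun y => gOf D f y s ξ) ∧
      (∀ᵐ y ∂(volume : Measure (EN N)),
        Continuous fun p : EN d × Mat d N => gOf D f y p.1 p.2)) ∧
    (∀ s ∈ M, ∀ ξ : Mat d N, TangentCols M s ξ →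
      (∀ y, gOf D f y s ξ = f y ξ) ∧ (∀ y, recc (gOf D f y s) ξ = recc (f y) ξ)) ∧
    (∀ (y : EN N) (s : EN d) (ξ : Mat d N) (i : Fin N),
      gOf D f (y + EuclideanSpace.single i 1) s ξ = gOf D f y s ξ) ∧
    (∃ α' β' : ℝ, 0 < α' ∧ α' ≤ β' ∧
      ∀ᵐ y ∂(volume : Measure (EN N)), ∀ (s : EN d) (ξ : Mat d N),
        α' * ‖ξ‖ ≤ gOf D f y s ξ ∧ gOf D f y s ξ ≤ β' * (1 + ‖ξ‖)) ∧
    (∃ C C' : ℝ, 0 < C ∧ 0 < C' ∧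
      ∀ᵐ y ∂(volume : Measure (EN N)), ∀ (s s' : EN d) (ξ ξ' : Mat d N),
        |gOf D f y s ξ - gOf D f y s' ξ| ≤ C * ‖s - s'‖ * ‖ξ‖ ∧
        |gOf D f y s ξ - gOf D f y s ξ'| ≤ C' * ‖ξ - ξ'‖) ∧
    (∀ C₀ q₀ : ℝ, H4 f C₀ q₀ →
      ∃ C'' q : ℝ, 0 < C'' ∧ 0 < q ∧ q < 1 ∧
        ∀ᵐ y ∂(volume : Measure (EN N)), ∀ (s : EN d) (ξ : Mat d N),
          |gOf D f y s ξ - recc (gOf D f y s) ξ| ≤ C'' * (1 + ‖ξ‖ ^ (1 - q))) := by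
  have hα := hf.alpha_pos
  have hαβ := hf.alpha_le_beta
  have hβ : 0 < β := hα.trans_le hαβ
  have hL := hf.lip_pos
  obtain ⟨K, hK, hQ⟩ := tanQ_lip D
  have hPs : ∀ (s s' : EN d) (ξ : Mat d N), ‖tanP D s ξ - tanP D s' ξ‖ ≤ K * ‖s - s'‖ * ‖ξ‖ := by
    intro s s' ξ
    have e : tanP D s ξ - tanP D s' ξ = (tanQ D s - tanQ D s').comp ξ := by
      rw [tanP_eq_comp, tanP_eq_comp]; ext v; simp
    rw [e]
    exact (ContinuousLinearMap.opNorm_comp_le _ _).trans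
      (mul_le_mul_of_nonneg_right (hQ s s') (norm_nonneg _))
  refine ⟨⟨fun s ξ => (hf.meas _).add_const _, ?_⟩, ?_, ?_, ?_, ?_, ?_⟩
  · filter_upwards [hf.lip] with y hy
    have hfc : Continuous (f y) := by
      refine (LipschitzWith.of_dist_le_mul (K := ⟨L, hL.le⟩) fun a b => ?_).continuous
      rw [Real.dist_eq, dist_eq_norm]; exact hy a b
    have hQc : Continuous (tanQ D) := by
      refine (LipschitzWith.of_dist_le_mul (K := ⟨K, hK.le⟩) fun a b => ?_).continuous
      rw [dist_eq_norm, dist_eq_norm]; exact hQ a b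
    have hPc : Continuous fun p : EN d × Mat d N => tanP D p.1 p.2 := by
      simp only [tanP_eq_comp]
      exact (hQc.comp continuous_fst).clm_comp continuous_snd
    unfold gOf
    exact (hfc.comp hPc).add (continuous_snd.sub hPc).norm
  · intro s hs ξ hξ
    have hp := tanP_of_tangent D hs hξ
    refine ⟨fun y => ?_, fun y => ?_⟩
    · simp [gOf, hp]
    · simp [recc, gOf, tanP_smul, hp]
  · intro y s ξ i
    simp [gOf, hf.periodic]
  · refine ⟨min α 1, β + 2, lt_min hα one_pos, (min_le_left _ _).trans (by linarith), ?_⟩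
    filter_upwards [hf.growth] with y hy s ξ
    obtain ⟨h1, h2⟩ := hy (tanP D s ξ)
    have h3 := tanP_norm_le D s ξ
    have h4 : ‖ξ‖ ≤ ‖tanP D s ξ‖ + ‖ξ - tanP D s ξ‖ := by
      simpa using norm_add_le (tanP D s ξ) (ξ - tanP D s ξ)
    have h5 := norm_sub_le ξ (tanP D s ξ)
    have h6 := norm_nonneg ξ
    unfold gOf
    constructor
    · have a1 : min α 1 * ‖tanP D s ξ‖ ≤ α * ‖tanP D s ξ‖ :=
        mul_le_mul_of_nonneg_right (min_le_left _ _) (norm_nonneg _)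
      have a2 : min α 1 * ‖ξ - tanP D s ξ‖ ≤ 1 * ‖ξ - tanP D s ξ‖ :=
        mul_le_mul_of_nonneg_right (min_le_right _ _) (norm_nonneg _)
      have a3 : min α 1 * ‖ξ‖ ≤ min α 1 * (‖tanP D s ξ‖ + ‖ξ - tanP D s ξ‖) :=
        mul_le_mul_of_nonneg_left h4 (lt_min hα one_pos).le
      linarith
    · have a1 : β * (1 + ‖tanP D s ξ‖) ≤ β * (1 + ‖ξ‖) :=
        mul_le_mul_of_nonneg_left (by linarith) hβ.le
      linarith
  · refine ⟨(L + 1) * K, L + 2, by positivity, by positivity, ?_⟩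
    filter_upwards [hf.lip] with y hy s s' ξ ξ'
    unfold gOf
    constructor
    · have h1 := hy (tanP D s ξ) (tanP D s' ξ)
      have h2 := hPs s s' ξ
      have h3 := abs_norm_sub_norm_le (ξ - tanP D s ξ) (ξ - tanP D s' ξ)
      rw [sub_sub_sub_cancel_left, norm_sub_rev (tanP D s' ξ)] at h3
      calc _ = |(f y (tanP D s ξ) - f y (tanP D s' ξ))
            + (‖ξ - tanP D s ξ‖ - ‖ξ - tanP D s' ξ‖)| := by congr 1; ring
        _ ≤ L * ‖tanP D s ξ - tanP D s' ξ‖ + ‖tanP D s ξ - tanP D s' ξ‖ :=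
          (abs_add_le _ _).trans (add_le_add h1 h3)
        _ = (L + 1) * ‖tanP D s ξ - tanP D s' ξ‖ := by ring
        _ ≤ (L + 1) * (K * ‖s - s'‖ * ‖ξ‖) := mul_le_mul_of_nonneg_left h2 (by positivity)
        _ = _ := by ring
    · have h1 := hy (tanP D s ξ) (tanP D s ξ')
      have h2 := tanP_sub_norm_le D s ξ ξ'
      have h3 := abs_norm_sub_norm_le (ξ - tanP D s ξ) (ξ' - tanP D s ξ')
      rw [sub_sub_sub_comm] at h3
      have h4 := norm_sub_le (ξ - ξ') (tanP D s ξ - tanP D s ξ')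
      have h5 := mul_le_mul_of_nonneg_left h2 hL.le
      calc _ = |(f y (tanP D s ξ) - f y (tanP D s ξ'))
            + (‖ξ - tanP D s ξ‖ - ‖ξ' - tanP D s ξ'‖)| := by congr 1; ring
        _ ≤ |f y (tanP D s ξ) - f y (tanP D s ξ')|
            + |‖ξ - tanP D s ξ‖ - ‖ξ' - tanP D s ξ'‖| := abs_add_le _ _
        _ ≤ _ := by linarith
  · rintro C₀ q₀ ⟨hC, hq, hq1, h4⟩
    refine ⟨C₀, q₀, hC, hq, hq1, ?_⟩
    filter_upwards [h4, hf.growth] with y hy hgr s ξ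
    rw [recc_gOf D f y β hβ.le (hf.nonneg y) (fun ξ => (hgr ξ).2)]
    unfold gOf
    rw [add_sub_add_right_eq_sub]
    refine (hy _).trans (mul_le_mul_of_nonneg_left ?_ hC.le)
    have := Real.rpow_le_rpow (norm_nonneg _) (tanP_norm_le D s ξ) (by linarith : 0 ≤ 1 - q₀)
    linarith
end
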